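/- Let N ≥ 2, let A > 0, and let K > 0. Then there exists a constant C > 0 (depending only on N, A and K) such that for every ε ∈ (0,1] and every Lipschitz function u on the open unit ball B₁(0) ⊂ ℝ^N with ∫_{B₁(0)} u² dx ≤ K that satisfies the distributional inequalities ±Δu ≤ A( (1/ε)χ_{{|u−1|<ε}} + 1 ), meaning that for every nonnegative smooth compactly supported φ : B₁(0) → ℝ one has ± ∫_{B₁(0)} u Δφ dx ≤ A ∫_{B₁(0)} ( (1/ε)χ_{{|u−1|<ε}}(x) + 1 ) φ(x) dx, the bound |∇u(x)| ≤ C holds for almost every x in the ball B_{1/2}(0). -/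

import Mathlib

open MeasureTheory Metric Set

/-- The Laplacian: sum of second partial derivatives. -/
noncomputable def lap {N : ℕ} (u : EuclideanSpace ℝ (Fin N) → ℝ)
    (x : EuclideanSpace ℝ (Fin N)) : ℝ :=
  ∑ i : Fin N, fderiv ℝ (fun y => fderiv ℝ u y (EuclideanSpace.single i 1)) x
    (EuclideanSpace.single i 1)

/-!
Mollifying `u - 1` gives a `C²` function `v` with `|Δv| ≤ A` outside the layer `{|v| < ε}` and
`|Δv| ≤ A / ε` everywhere (with `ε` doubled and `A` multiplied by `4`), so it suffices to bound
`∇v` independently of `ε`. Let `f = v - ε` and `g = -v - ε`, which are almost subharmonic where they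
are positive and are never nonnegative at the same point. In place of a monotonicity formula, the
maximum principle is applied to the two-point function `f(x) g(y) / |x - y|²`, localized and
slightly modified: coupling the displacement of `x` with its mirror image for `y` cancels the
singular term, and the outcome is `f(x) g(y) ≤ C |x - y|²`. If `f` grew faster than linearly away
from its zero set, then by Hopf's lemma it would be large at distance about `ε` from the layer; by
the two-point bound `g` is small nearby, so that Harnack's inequality, applied at scale `ε`, where
`|Δv| ≤ A / ε` is harmless, bounds `f` there. Hence `|v(x)| ≤ C (dist(x, layer) + ε)`, and the
interior gradient estimate on the ball of radius comparable to `dist(x, layer) + ε`, or to `1` when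
this is large, concludes.
-/

namespace TwoPhase

open Filter Topology Laplacian InnerProductSpace Module

section TwoJets

/-- The second-order Taylor data of a function of one real variable: `f` is differentiable near
`t`, with `f' t = f₁` and `f'' t = f₂`. -/
def HasTwoJetAt (f : ℝ → ℝ) (f₁ f₂ t : ℝ) : Prop :=
  ∃ f' : ℝ → ℝ, (∀ᶠ s in 𝓝 t, HasDerivAt f (f' s) s) ∧ f' t = f₁ ∧ HasDerivAt f' f₂ t

namespace HasTwoJetAt

variable {f g : ℝ → ℝ} {f₁ f₂ g₁ g₂ t : ℝ}

theorem hasDerivAt (hf : HasTwoJetAt f f₁ f₂ t) : HasDerivAt f f₁ t := by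
  obtain ⟨f', hf', rfl, -⟩ := hf
  exact hf'.self_of_nhds

theorem deriv_deriv_eq (hf : HasTwoJetAt f f₁ f₂ t) : deriv (deriv f) t = f₂ := by
  obtain ⟨f', hf', -, hf₂⟩ := hf
  have hderiv : deriv f =ᶠ[𝓝 t] f' := hf'.mono fun s hs => hs.deriv
  rw [hderiv.deriv_eq, hf₂.deriv]

theorem unique (hf : HasTwoJetAt f f₁ f₂ t) (hg : HasTwoJetAt f g₁ g₂ t) : f₂ = g₂ :=
  hf.deriv_deriv_eq.symm.trans hg.deriv_deriv_eq

theorem add (hf : HasTwoJetAt f f₁ f₂ t) (hg : HasTwoJetAt g g₁ g₂ t) :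
    HasTwoJetAt (fun s => f s + g s) (f₁ + g₁) (f₂ + g₂) t := by
  obtain ⟨f', hf', rfl, hf₂⟩ := hf
  obtain ⟨g', hg', rfl, hg₂⟩ := hg
  exact ⟨fun s => f' s + g' s, (hf'.and hg').mono fun s h => h.1.add h.2, rfl, hf₂.add hg₂⟩

theorem const_mul (c : ℝ) (hf : HasTwoJetAt f f₁ f₂ t) :
    HasTwoJetAt (fun s => c * f s) (c * f₁) (c * f₂) t := by
  obtain ⟨f', hf', rfl, hf₂⟩ := hf
  exact ⟨fun s => c * f' s, hf'.mono fun s h => h.const_mul c, rfl, hf₂.const_mul c⟩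

theorem sub (hf : HasTwoJetAt f f₁ f₂ t) (hg : HasTwoJetAt g g₁ g₂ t) :
    HasTwoJetAt (fun s => f s - g s) (f₁ - g₁) (f₂ - g₂) t := by
  simpa [sub_eq_add_neg] using hf.add (hg.const_mul (-1))

theorem quadratic (a b c : ℝ) :
    HasTwoJetAt (fun s => a + b * s + c * s ^ 2) b (2 * c) 0 := by
  refine ⟨fun s => b + c * (2 * s), .of_forall fun s => ?_, by simp, ?_⟩
  · exact ((((hasDerivAt_id' s).const_mul b).const_add a).add
      (((hasDerivAt_id' s).pow 2).const_mul c)).congr_deriv (by simp)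
  · exact ((((hasDerivAt_id' (0 : ℝ)).const_mul 2).const_mul c).const_add b).congr_deriv (by ring)

theorem comp (hg : HasTwoJetAt g g₁ g₂ (f t)) (hf : HasTwoJetAt f f₁ f₂ t) :
    HasTwoJetAt (fun s => g (f s)) (g₁ * f₁) (g₂ * f₁ ^ 2 + g₁ * f₂) t := by
  have hft := hf.hasDerivAt
  obtain ⟨f', hf', rfl, hf₂⟩ := hf
  obtain ⟨g', hg', rfl, hg₂⟩ := hg
  refine ⟨fun s => g' (f s) * f' s, ?_, rfl, ?_⟩
  · filter_upwards [hf', hft.continuousAt.eventually hg'] with s hfs hgs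
    exact hgs.comp s hfs
  · exact ((hg₂.comp t hft).mul hf₂).congr_deriv (by simp only [Function.comp]; ring)

theorem log (ht : t ≠ 0) : HasTwoJetAt Real.log t⁻¹ (-(t ^ 2)⁻¹) t :=
  ⟨fun s => s⁻¹, (eventually_ne_nhds ht).mono fun _ hs => Real.hasDerivAt_log hs, rfl,
    hasDerivAt_inv ht⟩

theorem second_nonpos_of_isLocalMax (hf : HasTwoJetAt f f₁ f₂ t) (hmax : IsLocalMax f t) :
    f₂ ≤ 0 := by
  by_contra! hpos
  have hmin : IsLocalMin f t := isLocalMin_of_deriv_deriv_pos (by rwa [hf.deriv_deriv_eq])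
    hmax.deriv_eq_zero hf.hasDerivAt.continuousAt
  have hconst : f =ᶠ[𝓝 t] fun _ => f t := by
    filter_upwards [hmax, hmin] with s h₁ h₂ using le_antisymm h₁ h₂
  have hzero : deriv (deriv f) t = 0 := by
    rw [hconst.deriv.deriv_eq]
    simp
  exact hpos.ne' (hf.deriv_deriv_eq.symm.trans hzero)

end HasTwoJetAt

end TwoJets

section LaplacianCalculus

variable {E : Type*} [NormedAddCommGroup E] [InnerProductSpace ℝ E] {f g : E → ℝ} {x : E}

theorem hasTwoJetAt_line (hf : ContDiffAt ℝ 2 f x) (ξ : E) :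
    HasTwoJetAt (fun s : ℝ => f (x + s • ξ)) (fderiv ℝ f x ξ)
      (fderiv ℝ (fderiv ℝ f) x ξ ξ) 0 := by
  have hline (s : ℝ) : HasDerivAt (fun s : ℝ => x + s • ξ) ξ s := by
    simpa using ((hasDerivAt_id s).smul_const ξ).const_add x
  have hnear : ∀ᶠ s in 𝓝 (0 : ℝ), DifferentiableAt ℝ f (x + s • ξ) := by
    have htend : Tendsto (fun s : ℝ => x + s • ξ) (𝓝 0) (𝓝 x) := by
      simpa using (hline 0).continuousAt.tendsto
    filter_upwards [htend.eventually (hf.eventually (by simp))] with s hs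
    exact hs.differentiableAt (by norm_num)
  have hfderiv : HasFDerivAt (fderiv ℝ f) (fderiv ℝ (fderiv ℝ f) x) (x + (0 : ℝ) • ξ) := by
    simpa using ((hf.fderiv_right (m := 1) (by norm_num)).differentiableAt
      (by norm_num)).hasFDerivAt
  refine ⟨fun s => fderiv ℝ f (x + s • ξ) ξ, hnear.mono fun s hs =>
    hs.hasFDerivAt.comp_hasDerivAt s (hline s), by simp, ?_⟩
  exact ((ContinuousLinearMap.apply ℝ ℝ ξ).hasFDerivAt.comp _ hfderiv).comp_hasDerivAt 0 (hline 0)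

theorem hasTwoJetAt_norm_sq_line (a ξ : E) :
    HasTwoJetAt (fun s : ℝ => ‖a + s • ξ‖ ^ 2) (2 * inner ℝ a ξ) (2 * ‖ξ‖ ^ 2) 0 := by
  convert HasTwoJetAt.quadratic (‖a‖ ^ 2) (2 * inner ℝ a ξ) (‖ξ‖ ^ 2) using 2 with s
  rw [norm_add_sq_real, inner_smul_right, norm_smul, mul_pow, Real.norm_eq_abs, sq_abs]
  ring

variable [FiniteDimensional ℝ E] {ι : Type*} [Fintype ι]

theorem laplacian_eq_sum_fderiv_fderiv (f : E → ℝ) (b : OrthonormalBasis ι ℝ E) (x : E) :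
    Δ f x = ∑ i, fderiv ℝ (fderiv ℝ f) x (b i) (b i) := by
  simp [laplacian_eq_iteratedFDeriv_orthonormalBasis f b, iteratedFDeriv_two_apply]

theorem laplacian_eq_sum_of_hasTwoJetAt (hf : ContDiffAt ℝ 2 f x) (b : OrthonormalBasis ι ℝ E)
    {f₁ f₂ : ι → ℝ} (h : ∀ i, HasTwoJetAt (fun s : ℝ => f (x + s • b i)) (f₁ i) (f₂ i) 0) :
    Δ f x = ∑ i, f₂ i := by
  rw [laplacian_eq_sum_fderiv_fderiv f b x]
  exact Finset.sum_congr rfl fun i _ => (hasTwoJetAt_line hf (b i)).unique (h i)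

theorem laplacian_nonpos_of_isLocalMax (hf : ContDiffAt ℝ 2 f x) (hmax : IsLocalMax f x) :
    Δ f x ≤ 0 := by
  rw [laplacian_eq_sum_fderiv_fderiv f (stdOrthonormalBasis ℝ E) x]
  refine Finset.sum_nonpos fun i _ =>
    (hasTwoJetAt_line hf _).second_nonpos_of_isLocalMax ?_
  have htend : Tendsto (fun s : ℝ => x + s • stdOrthonormalBasis ℝ E i) (𝓝 0) (𝓝 x) := by
    simpa using (Continuous.tendsto (by fun_prop) (0 : ℝ) :
      Tendsto (fun s : ℝ => x + s • stdOrthonormalBasis ℝ E i) (𝓝 0) _)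
  filter_upwards [htend.eventually hmax] with s hs
  simpa using hs

theorem laplacian_comp {G : ℝ → ℝ} {G₁ G₂ : ℝ} (hG : ContDiffAt ℝ 2 G (f x))
    (hjet : HasTwoJetAt G G₁ G₂ (f x)) (hf : ContDiffAt ℝ 2 f x) :
    Δ (fun y => G (f y)) x = G₂ * ‖fderiv ℝ f x‖ ^ 2 + G₁ * Δ f x := by
  let b := stdOrthonormalBasis ℝ E
  have hcomp : ContDiffAt ℝ 2 (fun y => G (f y)) x := hG.comp x hf
  rw [laplacian_eq_sum_of_hasTwoJetAt hcomp b fun i => HasTwoJetAt.comp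
      (f := fun s : ℝ => f (x + s • b i)) (by simpa using hjet) (hasTwoJetAt_line hf (b i)),
    Finset.sum_add_distrib, ← Finset.mul_sum, ← Finset.mul_sum, b.norm_dual,
    laplacian_eq_sum_fderiv_fderiv f b x]

theorem laplacian_add (hf : ContDiffAt ℝ 2 f x) (hg : ContDiffAt ℝ 2 g x) :
    Δ (fun y => f y + g y) x = Δ f x + Δ g x :=
  hf.laplacian_add hg

theorem laplacian_sub (hf : ContDiffAt ℝ 2 f x) (hg : ContDiffAt ℝ 2 g x) :
    Δ (fun y => f y - g y) x = Δ f x - Δ g x :=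
  hf.laplacian_sub hg

theorem laplacian_const_mul (c : ℝ) (hf : ContDiffAt ℝ 2 f x) :
    Δ (fun y => c * f y) x = c * Δ f x :=
  laplacian_smul c hf

theorem laplacian_sub_const (hf : ContDiffAt ℝ 2 f x) (c : ℝ) :
    Δ (fun y => f y - c) x = Δ f x := by
  rw [laplacian_sub hf contDiffAt_const, laplacian_const]
  simp

theorem laplacian_inner (e x : E) : Δ (fun y => inner ℝ e y) x = 0 := by
  have hconst : fderiv ℝ (fun y : E => inner ℝ e y) = fun _ => innerSL ℝ e :=
    funext fun y => (innerSL ℝ e).fderiv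
  simp [laplacian_eq_sum_fderiv_fderiv _ (stdOrthonormalBasis ℝ E), hconst]

theorem laplacian_inner_sq (e x : E) : Δ (fun y => inner ℝ e y ^ 2) x = 2 * ‖e‖ ^ 2 := by
  have hjet (t : ℝ) : HasTwoJetAt (fun s : ℝ => s ^ 2) (2 * t) 2 t :=
    ⟨fun s => 2 * s, .of_forall fun s => by simpa using hasDerivAt_pow 2 s, rfl,
      by simpa using (hasDerivAt_id t).const_mul 2⟩
  have hfderiv : fderiv ℝ (fun y : E => inner ℝ e y) x = innerSL ℝ e := (innerSL ℝ e).fderiv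
  have hsmooth : ContDiffAt ℝ 2 (fun y : E => inner ℝ e y) x := (innerSL ℝ e).contDiff.contDiffAt
  rw [laplacian_comp (G := fun s => s ^ 2) (by fun_prop) (hjet _) hsmooth, laplacian_inner,
    hfderiv]
  simp

theorem laplacian_norm_sub_sq (x₀ x : E) : Δ (fun y => ‖y - x₀‖ ^ 2) x = 2 * finrank ℝ E := by
  let b := stdOrthonormalBasis ℝ E
  have hsmooth : ContDiff ℝ 2 fun y : E => ‖y - x₀‖ ^ 2 :=
    (contDiff_id.sub contDiff_const).norm_sq ℝ
  rw [laplacian_eq_sum_of_hasTwoJetAt hsmooth.contDiffAt b fun i =>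
    by simpa [add_sub_right_comm] using hasTwoJetAt_norm_sq_line (x - x₀) (b i)]
  simp [mul_comm]

theorem laplacian_comp_add_isometry (hf : ContDiff ℝ 2 f) (R : E ≃ₗᵢ[ℝ] E) (x z : E) :
    Δ (fun z => f (x + R z)) z = Δ f (x + R z) := by
  let b := stdOrthonormalBasis ℝ E
  have hcomp : ContDiff ℝ 2 fun z => f (x + R z) := hf.comp (contDiff_const.add R.contDiff)
  rw [laplacian_eq_sum_of_hasTwoJetAt hcomp.contDiffAt b fun i => by
      simpa [add_assoc] using hasTwoJetAt_line hf.contDiffAt (x := x + R z) (R (b i)),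
    laplacian_eq_sum_fderiv_fderiv f (b.map R)]
  simp

theorem le_of_laplacian_pos {K O : Set E} (hf : ContDiff ℝ 2 f) (hK : IsCompact K)
    (hO : IsOpen O) (hOK : O ⊆ K) (hlap : ∀ x ∈ O, 0 < Δ f x) {c : ℝ}
    (hbd : ∀ y ∈ K \ O, f y ≤ c) (hx : x ∈ K) : f x ≤ c := by
  obtain ⟨z, hz, hmax⟩ := hK.exists_isMaxOn ⟨x, hx⟩ hf.continuous.continuousOn
  by_cases hzO : z ∈ O
  · have hloc : IsLocalMax f z := by
      filter_upwards [hO.mem_nhds hzO] with y hy using hmax (hOK hy)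
    exact absurd (laplacian_nonpos_of_isLocalMax hf.contDiffAt hloc) (hlap z hzO).not_ge
  · exact (hmax hx).trans (hbd z ⟨hz, hzO⟩)

end LaplacianCalculus

section MeanValue

variable {E : Type*} [NormedAddCommGroup E]

/-- The truncated paraboloid `(1 - |z|²)₊`, the averaging kernel of the mean value inequalities.
Its square is `C¹`, with gradient `-4 (1 - |z|²)₊ z`, so that integrating radial derivatives by
parts against it produces Laplacians. -/
noncomputable def cap (z : E) : ℝ := max (1 - ‖z‖ ^ 2) 0

theorem cap_nonneg (z : E) : 0 ≤ cap z := le_max_right _ _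

theorem cap_le_one (z : E) : cap z ≤ 1 := max_le (by nlinarith [norm_nonneg z]) zero_le_one

theorem cap_eq_zero {z : E} (hz : 1 ≤ ‖z‖) : cap z = 0 := max_eq_right (by nlinarith)

theorem three_quarters_le_cap {z : E} (hz : ‖z‖ ≤ 1 / 2) : 3 / 4 ≤ cap z :=
  le_max_of_le_left (by nlinarith [norm_nonneg z])

@[fun_prop]
theorem continuous_cap : Continuous (cap : E → ℝ) := by unfold cap; fun_prop

variable [InnerProductSpace ℝ E]

theorem hasDerivAt_max_zero_sq (t : ℝ) :
    HasDerivAt (fun s : ℝ => max s 0 ^ 2) (2 * max t 0) t := by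
  rcases lt_trichotomy t 0 with ht | rfl | ht
  · rw [max_eq_right ht.le, mul_zero]
    refine (hasDerivAt_const t (0 : ℝ)).congr_of_eventuallyEq ?_
    filter_upwards [gt_mem_nhds ht] with s hs
    simp [max_eq_right hs.le]
  · rw [max_self, mul_zero, hasDerivAt_iff_isLittleO_nhds_zero]
    refine Asymptotics.IsBigO.trans_isLittleO (.of_bound 1 (.of_forall fun h => ?_))
      (Asymptotics.isLittleO_pow_id one_lt_two)
    have hmax : |max h 0| ≤ |h| := by
      rw [abs_of_nonneg (le_max_right h 0)]
      exact max_le (le_abs_self h) (abs_nonneg h)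
    simpa using pow_le_pow_left₀ (abs_nonneg _) hmax 2
  · rw [max_eq_left ht.le]
    refine HasDerivAt.congr_of_eventuallyEq (by simpa using hasDerivAt_pow 2 t) ?_
    filter_upwards [lt_mem_nhds ht] with s hs
    simp [max_eq_left hs.le]

theorem hasFDerivAt_cap_sq (z : E) :
    HasFDerivAt (fun z : E => cap z ^ 2) (-(4 * cap z) • innerSL ℝ z) z := by
  have hparab : HasFDerivAt (fun z : E => 1 - ‖z‖ ^ 2) (-(2 • innerSL ℝ z)) z :=
    (hasStrictFDerivAt_norm_sq z).hasFDerivAt.const_sub 1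
  refine ((hasDerivAt_max_zero_sq _).comp_hasFDerivAt z hparab).congr_fderiv ?_
  ext y
  simp [cap]
  ring

variable [FiniteDimensional ℝ E]

theorem hasCompactSupport_cap : HasCompactSupport (cap : E → ℝ) :=
  .intro (isCompact_closedBall 0 1) fun z hz => cap_eq_zero (by simpa using (not_le.1 (by
    simpa using hz) : 1 < ‖z‖).le)

theorem continuous_laplacian {w : E → ℝ} (hw : ContDiff ℝ 2 w) : Continuous (Δ w) := by
  have hD : Continuous (fderiv ℝ (fderiv ℝ w)) :=
    (hw.fderiv_right (m := 1) (by norm_num)).continuous_fderiv (by norm_num)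
  simp_rw [funext fun x => laplacian_eq_sum_fderiv_fderiv w (stdOrthonormalBasis ℝ E) x]
  exact continuous_finsetSum _ fun i _ =>
    (hD.clm_apply continuous_const).clm_apply continuous_const

variable [MeasurableSpace E] [BorelSpace E] {f w : E → ℝ}

theorem integrable_mul_cap (hf : Continuous f) : Integrable (fun z => f z * cap z) :=
  (hf.mul continuous_cap).integrable_of_hasCompactSupport hasCompactSupport_cap.mul_left

theorem integrable_mul_cap_sq (hf : Continuous f) : Integrable (fun z => f z * cap z ^ 2) := by
  simpa [pow_two, mul_assoc] using integrable_mul_cap (hf.mul continuous_cap)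

theorem integral_cap_pos : 0 < ∫ z : E, cap z :=
  continuous_cap.integral_pos_of_hasCompactSupport_nonneg_nonzero hasCompactSupport_cap cap_nonneg
    (x := 0) (by simp [cap])

theorem integral_fderiv_apply_mul_cap_sq (hf : ContDiff ℝ 1 f) (e : E) :
    ∫ z, fderiv ℝ f z e * cap z ^ 2 = 4 * ∫ z, f z * inner ℝ e z * cap z := by
  have hcap (z : E) : fderiv ℝ (fun z : E => cap z ^ 2) z e = -4 * (inner ℝ e z * cap z) := by
    rw [(hasFDerivAt_cap_sq z).fderiv]
    simp [real_inner_comm]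
    ring
  have hDf : Continuous fun z => fderiv ℝ f z e :=
    (hf.continuous_fderiv (by norm_num)).clm_apply continuous_const
  have hint : Integrable fun z => f z * inner ℝ e z * cap z :=
    integrable_mul_cap (hf.continuous.mul (by fun_prop))
  have hparts := integral_mul_fderiv_eq_neg_fderiv_mul_of_integrable (μ := volume) (f := f)
    (g := fun z => cap z ^ 2) (v := e) (integrable_mul_cap_sq hDf)
    (by simpa only [hcap, mul_left_comm, mul_assoc] using hint.const_mul (-4))
    (integrable_mul_cap_sq hf.continuous)
    (fun z _ => hf.differentiable (by norm_num) z)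
    (fun z _ => (hasFDerivAt_cap_sq z).differentiableAt)
  rw [← neg_inj, ← hparts, ← integral_const_mul, ← integral_neg]
  exact integral_congr_ae (.of_forall fun z => by simp only [hcap]; ring)

theorem integral_fderiv_radial_mul_cap (hw : ContDiff ℝ 2 w) (p : E) (r : ℝ) :
    ∫ z, fderiv ℝ w (p + r • z) z * cap z = r / 4 * ∫ z, Δ w (p + r • z) * cap z ^ 2 := by
  let b := stdOrthonormalBasis ℝ E
  have hline : ContDiff ℝ 1 fun z : E => p + r • z := by fun_prop
  have hD : ContDiff ℝ 1 (fderiv ℝ w) := hw.fderiv_right (by norm_num)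
  have hDi (i) : ContDiff ℝ 1 fun z => fderiv ℝ w (p + r • z) (b i) :=
    (hD.comp hline).clm_apply contDiff_const
  have hderiv (i) (z : E) : fderiv ℝ (fun z => fderiv ℝ w (p + r • z) (b i)) z (b i) =
      r * fderiv ℝ (fderiv ℝ w) (p + r • z) (b i) (b i) := by
    have hl : HasFDerivAt (fun z : E => p + r • z) (r • ContinuousLinearMap.id ℝ E) z :=
      ((hasFDerivAt_id z).const_smul r).const_add p
    have hDz := ((hD.differentiable (by norm_num)) (p + r • z)).hasFDerivAt
    have hcomp := (hDz.comp z hl).clm_apply (hasFDerivAt_const (b i) z)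
    simp only [Function.comp_apply] at hcomp
    simp [hcomp.fderiv]
  have hparts (i) := integral_fderiv_apply_mul_cap_sq (hDi i) (b i)
  have hradial (z : E) : fderiv ℝ w (p + r • z) z * cap z =
      ∑ i, fderiv ℝ w (p + r • z) (b i) * inner ℝ (b i) z * cap z := by
    conv_lhs => rw [← b.sum_repr' z, map_sum, Finset.sum_mul]
    simp [b.sum_repr' z, mul_comm]
  have hlap (z : E) : r * (Δ w (p + r • z) * cap z ^ 2) =
      ∑ i, fderiv ℝ (fun z => fderiv ℝ w (p + r • z) (b i)) z (b i) * cap z ^ 2 := by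
    simp_rw [hderiv, laplacian_eq_sum_fderiv_fderiv w b, Finset.sum_mul, Finset.mul_sum, mul_assoc]
  have hint₁ (i) := integrable_mul_cap (f := fun z => fderiv ℝ w (p + r • z) (b i) *
    inner ℝ (b i) z) ((hDi i).continuous.mul (by fun_prop))
  have hint₂ (i) := integrable_mul_cap_sq (f := fun z =>
    fderiv ℝ (fun z => fderiv ℝ w (p + r • z) (b i)) z (b i))
    (((hDi i).continuous_fderiv (by norm_num)).clm_apply continuous_const)
  rw [div_mul_eq_mul_div, ← integral_const_mul]
  simp_rw [hradial, hlap]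
  rw [integral_finsetSum _ fun i _ => hint₁ i, integral_finsetSum _ fun i _ => hint₂ i]
  simp_rw [hparts, ← Finset.mul_sum]
  ring

theorem hasDerivAt_integral_mul_cap (hw : ContDiff ℝ 2 w) (p : E) (r : ℝ) :
    HasDerivAt (fun r : ℝ => ∫ z, w (p + r • z) * cap z)
      (r / 4 * ∫ z, Δ w (p + r • z) * cap z ^ 2) r := by
  rw [← integral_fderiv_radial_mul_cap hw]
  have hD : Continuous (fderiv ℝ w) := hw.continuous_fderiv (by norm_num)
  have hwc := hw.continuous
  obtain ⟨M, hM⟩ := (isCompact_closedBall p (|r| + 1)).exists_bound_of_continuousOn hD.continuousOn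
  have hbound (z : E) (s : ℝ) (hs : s ∈ ball r 1) :
      ‖fderiv ℝ w (p + s • z) z * cap z‖ ≤ M * cap z := by
    rw [norm_mul, Real.norm_of_nonneg (cap_nonneg z)]
    rcases le_or_gt 1 ‖z‖ with hz | hz
    · simp [cap_eq_zero hz]
    have hs' : |s| ≤ |r| + 1 := by
      have hsr : |s - r| < 1 := by simpa [Real.dist_eq] using hs
      linarith [abs_sub_abs_le_abs_sub s r]
    have hmem : p + s • z ∈ closedBall p (|r| + 1) := by
      simpa [norm_smul] using (mul_le_of_le_one_right (abs_nonneg s) hz.le).trans hs'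
    refine mul_le_mul_of_nonneg_right ?_ (cap_nonneg z)
    calc ‖fderiv ℝ w (p + s • z) z‖ ≤ ‖fderiv ℝ w (p + s • z)‖ * ‖z‖ :=
          ContinuousLinearMap.le_opNorm _ _
      _ ≤ M := (mul_le_of_le_one_right (norm_nonneg _) hz.le).trans (hM _ hmem)
  refine (hasDerivAt_integral_of_dominated_loc_of_deriv_le (ball_mem_nhds r one_pos)
    (.of_forall fun s => (integrable_mul_cap (by fun_prop)).aestronglyMeasurable)
    (integrable_mul_cap (by fun_prop)) (integrable_mul_cap ?_).aestronglyMeasurable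
    (.of_forall hbound) (integrable_mul_cap continuous_const)
    (.of_forall fun z s _ => ?_)).2
  · exact (hD.comp (by fun_prop)).clm_apply continuous_id
  · have hl : HasDerivAt (fun s : ℝ => p + s • z) z s := by
      simpa using ((hasDerivAt_id s).smul_const z).const_add p
    exact ((hw.differentiable (by norm_num) (p + s • z)).hasFDerivAt.comp_hasDerivAt s hl).mul_const
      _

theorem mul_integral_cap_le_of_le_laplacian (hw : ContDiff ℝ 2 w) {p : E} {R B : ℝ} (hR : 0 ≤ R)
    (hB₀ : 0 ≤ B) (hB : ∀ z ∈ closedBall p R, -B ≤ Δ w z) :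
    w p * ∫ z : E, cap z ≤ (∫ z, w (p + R • z) * cap z) + B * R ^ 2 / 8 * ∫ z : E, cap z := by
  set I := ∫ z : E, cap z
  have hderiv (r : ℝ) : HasDerivAt (fun r : ℝ => (∫ z, w (p + r • z) * cap z) + B * I / 8 * r ^ 2)
      (r / 4 * (∫ z, Δ w (p + r • z) * cap z ^ 2) + B * I / 8 * (2 * r)) r :=
    (hasDerivAt_integral_mul_cap hw p r).add
      (by simpa using (hasDerivAt_pow 2 r).const_mul (B * I / 8))
  have hlap (r : ℝ) (hr : r ∈ Icc 0 R) : -(B * I) ≤ ∫ z, Δ w (p + r • z) * cap z ^ 2 := by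
    rw [← neg_mul, ← integral_const_mul]
    refine integral_mono (integrable_mul_cap continuous_const)
      (integrable_mul_cap_sq ((continuous_laplacian hw).comp (by fun_prop))) fun z => ?_
    rcases le_or_gt 1 ‖z‖ with hz | hz
    · simp [cap_eq_zero hz]
    have hmem : p + r • z ∈ closedBall p R := by
      simpa [norm_smul, abs_of_nonneg hr.1] using (mul_le_of_le_one_right hr.1 hz.le).trans hr.2
    have hcap : cap z ^ 2 ≤ cap z := by nlinarith [cap_nonneg z, cap_le_one z]
    nlinarith [hB _ hmem, sq_nonneg (cap z)]
  have hmono : MonotoneOn (fun r : ℝ => (∫ z, w (p + r • z) * cap z) + B * I / 8 * r ^ 2)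
      (Icc 0 R) := by
    refine monotoneOn_of_hasDerivWithinAt_nonneg (convex_Icc 0 R)
      (fun r _ => (hderiv r).continuousAt.continuousWithinAt)
      (fun r _ => (hderiv r).hasDerivWithinAt) fun r hr => ?_
    have hr' := interior_subset hr
    nlinarith [hlap r hr', hr'.1]
  have := hmono (left_mem_Icc.2 hR) (right_mem_Icc.2 hR) hR
  simp only [zero_smul, add_zero, integral_const_mul] at this
  linarith

theorem integral_mul_cap_le_of_laplacian_le (hw : ContDiff ℝ 2 w) {p : E} {R B : ℝ} (hR : 0 ≤ R)
    (hB₀ : 0 ≤ B) (hB : ∀ z ∈ closedBall p R, Δ w z ≤ B) :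
    (∫ z, w (p + R • z) * cap z) ≤ w p * (∫ z : E, cap z) + B * R ^ 2 / 8 * ∫ z : E, cap z := by
  have hneg : Δ (fun z => -w z) = -Δ w := laplacian_neg
  have := mul_integral_cap_le_of_le_laplacian hw.neg hR hB₀ fun z (hz : z ∈ closedBall p R) => by
    simpa [hneg] using hB z hz
  simp only [neg_mul, integral_neg] at this
  linarith

theorem integral_comp_add_smul (f : E → ℝ) (q : E) {R : ℝ} (hR : 0 < R) :
    ∫ z, f (q + R • z) = (R ^ finrank ℝ E)⁻¹ * ∫ y, f y := by
  rw [Measure.integral_comp_smul volume (fun y => f (q + y)) R,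
    integral_add_left_eq_self (fun y => f y) q]
  simp [abs_of_pos hR]

theorem integral_comp_add_smul_mul_cap (w : E → ℝ) (q : E) {R : ℝ} (hR : 0 < R) :
    ∫ z, w (q + R • z) * cap z = (R ^ finrank ℝ E)⁻¹ * ∫ y, w y * cap (R⁻¹ • (y - q)) := by
  rw [← integral_comp_add_smul _ q hR]
  simp [smul_smul, hR.ne']

end MeanValue

section Harnack

variable {E : Type*} [NormedAddCommGroup E] [InnerProductSpace ℝ E]

theorem cap_inv_smul_sub_eq_zero {y q : E} {R : ℝ} (hR : 0 < R) (hy : R ≤ dist y q) :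
    cap (R⁻¹ • (y - q)) = 0 := by
  refine cap_eq_zero ?_
  rwa [norm_smul, norm_inv, Real.norm_of_nonneg hR.le, ← div_eq_inv_mul, le_div_iff₀ hR, one_mul,
    ← dist_eq_norm]

theorem cap_inv_smul_sub_le {p q : E} {R : ℝ} (hR : 0 < R) (hq : q ∈ closedBall p R) (y : E) :
    cap (R⁻¹ • (y - q)) ≤ 4 / 3 * cap ((4 * R)⁻¹ • (y - p)) := by
  rcases le_total R (dist y q) with hy | hy
  · rw [cap_inv_smul_sub_eq_zero hR hy]
    have := cap_nonneg ((4 * R)⁻¹ • (y - p))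
    positivity
  · have hyp : ‖(4 * R)⁻¹ • (y - p)‖ ≤ 1 / 2 := by
      rw [norm_smul, norm_inv, Real.norm_of_nonneg (by positivity), ← div_eq_inv_mul,
        div_le_iff₀ (by positivity), ← dist_eq_norm]
      linarith [dist_triangle y q p, mem_closedBall.1 hq]
    linarith [cap_le_one (R⁻¹ • (y - q)), three_quarters_le_cap hyp]

variable [FiniteDimensional ℝ E] [MeasurableSpace E] [BorelSpace E] {w : E → ℝ}

theorem integrable_mul_cap_inv_smul_sub (hw : Continuous w) (q : E) {R : ℝ} (hR : 0 < R) :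
    Integrable fun y => w y * cap (R⁻¹ • (y - q)) := by
  refine (hw.mul (by fun_prop)).integrable_of_hasCompactSupport
    (HasCompactSupport.intro (isCompact_closedBall q R) fun y hy => ?_).mul_left
  exact cap_inv_smul_sub_eq_zero hR (not_le.1 hy).le

theorem integral_mul_cap_le_of_mem_closedBall (hw : Continuous w) {p q : E} {R : ℝ} (hR : 0 < R)
    (hw₀ : ∀ z ∈ closedBall p (4 * R), 0 ≤ w z) (hq : q ∈ closedBall p R) :
    ∫ z, w (q + R • z) * cap z ≤
      4 / 3 * 4 ^ finrank ℝ E * ∫ z, w (p + (4 * R) • z) * cap z := by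
  have h4R : 0 < 4 * R := by positivity
  have hkernel : ∫ y, w y * cap (R⁻¹ • (y - q)) ≤
      4 / 3 * ∫ y, w y * cap ((4 * R)⁻¹ • (y - p)) := by
    rw [← integral_const_mul]
    refine integral_mono (integrable_mul_cap_inv_smul_sub hw q hR)
      ((integrable_mul_cap_inv_smul_sub hw p h4R).const_mul _) fun y => ?_
    have hle := cap_inv_smul_sub_le hR hq y
    by_cases hy : y ∈ closedBall p (4 * R)
    · linarith [mul_le_mul_of_nonneg_left hle (hw₀ y hy)]
    · have hp := cap_inv_smul_sub_eq_zero h4R (not_le.1 hy).le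
      rw [hp, mul_zero] at hle
      rw [hp, le_antisymm hle (cap_nonneg _)]
      simp
  rw [integral_comp_add_smul_mul_cap w q hR, integral_comp_add_smul_mul_cap w p h4R]
  have hscale : (R ^ finrank ℝ E)⁻¹ = 4 ^ finrank ℝ E * ((4 * R) ^ finrank ℝ E)⁻¹ := by
    rw [mul_pow]
    field_simp
  rw [hscale]
  have hnonneg : 0 ≤ 4 ^ finrank ℝ E * ((4 * R) ^ finrank ℝ E)⁻¹ := by positivity
  linarith [mul_le_mul_of_nonneg_left hkernel hnonneg]

theorem harnack (hw : ContDiff ℝ 2 w) {p q : E} {R B : ℝ} (hR : 0 < R)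
    (hB : ∀ z ∈ closedBall p (4 * R), |Δ w z| ≤ B) (hw₀ : ∀ z ∈ closedBall p (4 * R), 0 ≤ w z)
    (hq : q ∈ closedBall p R) :
    w q ≤ 4 ^ (finrank ℝ E + 1) * (w p + B * R ^ 2) := by
  have hp : p ∈ closedBall p (4 * R) := mem_closedBall_self (by positivity)
  have hB₀ : 0 ≤ B := (abs_nonneg _).trans (hB p hp)
  have hsub : closedBall q R ⊆ closedBall p (4 * R) :=
    closedBall_subset_closedBall' (by linarith [mem_closedBall.1 hq])
  have hmean_q := mul_integral_cap_le_of_le_laplacian hw hR.le hB₀ fun z hz =>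
    (abs_le.1 (hB z (hsub hz))).1
  have hmean_p := integral_mul_cap_le_of_laplacian_le hw (by positivity : 0 ≤ 4 * R) hB₀ fun z hz =>
    (abs_le.1 (hB z hz)).2
  have hcomp := integral_mul_cap_le_of_mem_closedBall hw.continuous hR hw₀ hq
  have hI : 0 < ∫ z : E, cap z := integral_cap_pos
  have hone : (1 : ℝ) ≤ 4 ^ finrank ℝ E := one_le_pow₀ (by norm_num)
  have hBR : 0 ≤ B * R ^ 2 := by positivity
  have hcollect : w q ≤ 4 / 3 * 4 ^ finrank ℝ E * (w p + B * (4 * R) ^ 2 / 8) + B * R ^ 2 / 8 := by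
    refine le_of_mul_le_mul_right ?_ hI
    linarith [mul_le_mul_of_nonneg_left hmean_p
      (by positivity : (0 : ℝ) ≤ 4 / 3 * 4 ^ finrank ℝ E)]
  rw [pow_succ]
  nlinarith [mul_nonneg (sub_nonneg.2 hone) hBR,
    mul_nonneg (by positivity : (0 : ℝ) ≤ 4 ^ finrank ℝ E) (hw₀ p hp)]

end Harnack

section GradientEstimate

variable {E : Type*} [NormedAddCommGroup E] [InnerProductSpace ℝ E]

/-- The quadratic barrier `S |z|² / d² + (n S / d² + F) (2 d ⟨e, z⟩ - ⟨e, z⟩²)` on the half ball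
`{|z| ≤ d, ⟨e, z⟩ ≥ 0}`, where `n` is the dimension: nonnegative there, at least `S` on the
spherical part of the boundary, and with Laplacian `-2 F`. -/
noncomputable def halfBallBarrier (e : E) (d S F : ℝ) (z : E) : ℝ :=
  S / d ^ 2 * ‖z - 0‖ ^ 2 +
    (finrank ℝ E * S / d ^ 2 + F) * (2 * d * inner ℝ e z - inner ℝ e z ^ 2)

theorem contDiff_halfBallBarrier (e : E) (d S F : ℝ) : ContDiff ℝ 2 (halfBallBarrier e d S F) := by
  have hinner : ContDiff ℝ 2 fun z : E => inner ℝ e z := contDiff_const.inner ℝ contDiff_id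
  exact (contDiff_const.mul ((contDiff_id.sub contDiff_const).norm_sq ℝ)).add
    (contDiff_const.mul ((contDiff_const.mul hinner).sub (hinner.pow 2)))

theorem hasFDerivAt_halfBallBarrier_zero (e : E) (d S F : ℝ) :
    HasFDerivAt (halfBallBarrier e d S F)
      (((finrank ℝ E * S / d ^ 2 + F) * (2 * d)) • innerSL ℝ e) 0 := by
  have hinner : HasFDerivAt (fun z : E => inner ℝ e z) (innerSL ℝ e) 0 :=
    (innerSL ℝ e).hasFDerivAt
  have hnorm : HasFDerivAt (fun z : E => ‖z - 0‖ ^ 2) (0 : E →L[ℝ] ℝ) 0 := by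
    simpa using (hasStrictFDerivAt_norm_sq (0 : E)).hasFDerivAt
  refine ((hnorm.const_mul (S / d ^ 2)).add (((hinner.const_mul (2 * d)).sub
    (hinner.pow 2)).const_mul (finrank ℝ E * S / d ^ 2 + F))).congr_fderiv ?_
  ext y
  simp [mul_assoc]

variable {e : E} {d S F : ℝ}

theorem halfBallBarrier_part_nonneg (he : ‖e‖ = 1) (hS : 0 ≤ S) (hF : 0 ≤ F) {z : E}
    (hz : ‖z‖ ≤ d) (hez : 0 ≤ inner ℝ e z) :
    0 ≤ (finrank ℝ E * S / d ^ 2 + F) * (2 * d * inner ℝ e z - inner ℝ e z ^ 2) := by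
  have hle : inner ℝ e z ≤ d := (real_inner_le_norm e z).trans (by rwa [he, one_mul])
  exact mul_nonneg (by positivity) (by nlinarith)

variable [FiniteDimensional ℝ E]

theorem laplacian_halfBallBarrier (he : ‖e‖ = 1) (z : E) :
    Δ (halfBallBarrier e d S F) z = -2 * F := by
  have hinner : ContDiffAt ℝ 2 (fun z : E => inner ℝ e z) z :=
    contDiffAt_const.inner ℝ contDiffAt_id
  have hnorm : ContDiffAt ℝ 2 (fun z : E => ‖z - 0‖ ^ 2) z :=
    ((contDiff_id.sub contDiff_const).norm_sq ℝ).contDiffAt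
  have hlin := contDiffAt_const (c := 2 * d).mul hinner
  have hquad := hlin.sub (hinner.pow 2)
  unfold halfBallBarrier
  rw [laplacian_add (contDiffAt_const.mul hnorm) (contDiffAt_const.mul hquad),
    laplacian_const_mul _ hnorm, laplacian_const_mul _ hquad, laplacian_sub hlin (hinner.pow 2),
    laplacian_const_mul _ hinner, laplacian_norm_sub_sq, laplacian_inner, laplacian_inner_sq, he]
  ring

variable {Φ v : E → ℝ}

theorem le_halfBallBarrier (hΦ : ContDiff ℝ 2 Φ) (he : ‖e‖ = 1) (hd : 0 < d) (hF : 0 < F)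
    (hS₀ : 0 ≤ S) (hS : ∀ z ∈ closedBall 0 d, Φ z ≤ S)
    (hlap : ∀ z ∈ closedBall 0 d, -F ≤ Δ Φ z) (hΦ₀ : ∀ z, inner ℝ e z = 0 → Φ z ≤ 0)
    {z : E} (hz : z ∈ closedBall 0 d) (hez : 0 ≤ inner ℝ e z) :
    Φ z ≤ halfBallBarrier e d S F z := by
  have hΨ := contDiff_halfBallBarrier e d S F
  rw [← sub_nonpos]
  refine le_of_laplacian_pos (K := closedBall 0 d ∩ {z | 0 ≤ inner ℝ e z})
    (O := ball 0 d ∩ {z | 0 < inner ℝ e z}) (hΦ.sub hΨ)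
    ((isCompact_closedBall _ _).inter_right (isClosed_le continuous_const (by fun_prop)))
    (isOpen_ball.inter (isOpen_lt continuous_const (by fun_prop)))
    (inter_subset_inter ball_subset_closedBall fun z hz => le_of_lt (a := (0 : ℝ)) hz) ?_ ?_
    ⟨hz, hez⟩
  · rintro y ⟨hy, -⟩
    rw [laplacian_sub hΦ.contDiffAt hΨ.contDiffAt, laplacian_halfBallBarrier he]
    linarith [hlap y (ball_subset_closedBall hy)]
  · rintro y ⟨⟨hy, hey : 0 ≤ inner ℝ e y⟩, hyO⟩
    have hnorm : ‖y‖ ≤ d := by simpa using hy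
    have hpart := halfBallBarrier_part_nonneg he hS₀ hF.le hnorm hey
    unfold halfBallBarrier
    rw [sub_zero]
    rcases hey.eq_or_lt with hey₀ | hey₀
    · have : 0 ≤ S / d ^ 2 * ‖y‖ ^ 2 := by positivity
      linarith [hΦ₀ y hey₀.symm]
    · have hyd : ‖y‖ = d := hnorm.antisymm (not_lt.1 fun hlt => hyO ⟨by simpa using hlt, hey₀⟩)
      have hSd : S / d ^ 2 * ‖y‖ ^ 2 = S := by
        rw [hyd]
        field_simp
      linarith [hS y hy]

theorem fderiv_zero_apply_le (hΦ : ContDiff ℝ 2 Φ) (he : ‖e‖ = 1) (hd : 0 < d) (hF : 0 < F)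
    (hS : ∀ z ∈ closedBall 0 d, Φ z ≤ S) (hlap : ∀ z ∈ closedBall 0 d, -F ≤ Δ Φ z)
    (hΦ₀ : ∀ z, inner ℝ e z = 0 → Φ z = 0) :
    fderiv ℝ Φ 0 e ≤ 2 * finrank ℝ E * S / d + 2 * F * d := by
  have hΦ00 : Φ 0 = 0 := hΦ₀ 0 (inner_zero_right e)
  have hS₀ : 0 ≤ S := hΦ00.ge.trans (hS 0 (mem_closedBall_self hd.le))
  have hmin : IsMinOn (fun z => halfBallBarrier e d S F z - Φ z)
      (closedBall 0 d ∩ {z | 0 ≤ inner ℝ e z}) 0 := fun z hz => by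
    have := le_halfBallBarrier hΦ he hd hF hS₀ hS hlap (fun z h => (hΦ₀ z h).le) hz.1 hz.2
    simpa [hΦ00, halfBallBarrier] using this
  have hderiv := (hasFDerivAt_halfBallBarrier_zero e d S F).sub
    ((hΦ.differentiable (by norm_num)) 0).hasFDerivAt
  have hseg : segment ℝ 0 (0 + d • e) ⊆ closedBall 0 d ∩ {z | 0 ≤ inner ℝ e z} := by
    refine Convex.segment_subset ((convex_closedBall 0 d).inter
      (convex_halfSpace_ge (innerSL ℝ e).isLinear 0)) ⟨mem_closedBall_self hd.le, by simp⟩ ?_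
    simp [norm_smul, he, inner_smul_right, hd.le, abs_of_pos hd]
  have hnonneg := hmin.localize.hasFDerivWithinAt_nonneg hderiv.hasFDerivWithinAt
    (mem_posTangentConeAt_of_segment_subset hseg)
  have hprod : 0 ≤ d * ((finrank ℝ E * S / d ^ 2 + F) * (2 * d) - fderiv ℝ Φ 0 e) := by
    simpa [he, mul_sub, mul_comm, mul_assoc, mul_left_comm] using hnonneg
  have hbound := nonneg_of_mul_nonneg_right hprod hd
  have : (finrank ℝ E * S / d ^ 2 + F) * (2 * d) = 2 * finrank ℝ E * S / d + 2 * F * d := by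
    field_simp
  linarith

-- Half the difference of `v` and its reflection across the hyperplane `e^⊥` vanishes on that
-- hyperplane and has the same derivative as `v` in the direction `e`.
theorem fderiv_apply_le (hv : ContDiff ℝ 2 v) {x : E} (he : ‖e‖ = 1) (hd : 0 < d) (hF : 0 < F)
    (hS : ∀ z ∈ closedBall x d, |v z| ≤ S) (hlap : ∀ z ∈ closedBall x d, |Δ v z| ≤ F) :
    fderiv ℝ v x e ≤ 2 * finrank ℝ E * S / d + 2 * F * d := by
  let R := (Submodule.span ℝ {e})ᗮ.reflection
  have hsmooth (T : E ≃ₗᵢ[ℝ] E) : ContDiff ℝ 2 fun z => v (x + T z) :=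
    hv.comp (contDiff_const.add T.contDiff)
  have hderiv (T : E ≃ₗᵢ[ℝ] E) : fderiv ℝ (fun z => v (x + T z)) 0 e = fderiv ℝ v x (T e) := by
    have hT : HasFDerivAt (fun z => x + T z) (T : E →L[ℝ] E) 0 :=
      (T : E →L[ℝ] E).hasFDerivAt.const_add x
    have hvx : HasFDerivAt v (fderiv ℝ v x) (x + T 0) := by
      simpa using (hv.differentiable (by norm_num) x).hasFDerivAt
    have hcomp : HasFDerivAt (fun z => v (x + T z)) (fderiv ℝ v x ∘L (T : E →L[ℝ] E)) 0 :=
      hvx.comp 0 hT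
    rw [hcomp.fderiv]
    rfl
  have hmem (T : E ≃ₗᵢ[ℝ] E) {z : E} (hz : z ∈ closedBall 0 d) : x + T z ∈ closedBall x d := by
    simpa using hz
  have hhalf := fderiv_zero_apply_le (S := S) (Φ := fun z => 1 / 2 *
      (v (x + LinearIsometryEquiv.refl ℝ E z) - v (x + R z)))
    (contDiff_const.mul ((hsmooth _).sub (hsmooth R))) he hd hF (fun z hz => ?_) (fun z hz => ?_)
    fun z hz => ?_
  · have hRe : R e = -e := Submodule.reflection_orthogonalComplement_singleton_eq_neg e
    have hdiff (T : E ≃ₗᵢ[ℝ] E) : DifferentiableAt ℝ (fun z => v (x + T z)) 0 :=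
      (hsmooth T).differentiable (by norm_num) 0
    rw [fderiv_const_mul ((hdiff (.refl ℝ E)).fun_sub (hdiff R)),
      fderiv_fun_sub (hdiff _) (hdiff R)] at hhalf
    rw [smul_apply, sub_apply, hderiv, hderiv, hRe, map_neg, smul_eq_mul] at hhalf
    simp only [LinearIsometryEquiv.coe_refl, id] at hhalf
    linarith
  · linarith [(abs_le.1 (hS _ (hmem (.refl ℝ E) hz))).2, (abs_le.1 (hS _ (hmem R hz))).1]
  · rw [laplacian_const_mul _ ((hsmooth _).sub (hsmooth R)).contDiffAt,
      laplacian_sub (hsmooth _).contDiffAt (hsmooth R).contDiffAt,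
      laplacian_comp_add_isometry hv, laplacian_comp_add_isometry hv]
    linarith [(abs_le.1 (hlap _ (hmem (.refl ℝ E) hz))).1, (abs_le.1 (hlap _ (hmem R hz))).2]
  · have hRz : R z = z := Submodule.reflection_mem_subspace_eq_self
      (Submodule.mem_orthogonal_singleton_iff_inner_right.2 hz)
    simp [hRz]

theorem norm_fderiv_le (hv : ContDiff ℝ 2 v) {x : E} (hd : 0 < d) (hF : 0 < F)
    (hS : ∀ z ∈ closedBall x d, |v z| ≤ S) (hlap : ∀ z ∈ closedBall x d, |Δ v z| ≤ F) :
    ‖fderiv ℝ v x‖ ≤ 2 * finrank ℝ E * S / d + 2 * F * d := by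
  have hS₀ : 0 ≤ S := (abs_nonneg _).trans (hS x (mem_closedBall_self hd.le))
  refine ContinuousLinearMap.opNorm_le_of_unit_norm (by positivity) fun e he => abs_le'.2
    ⟨fderiv_apply_le hv he hd hF hS hlap, ?_⟩
  simpa using fderiv_apply_le hv (e := -e) (by rwa [norm_neg]) hd hF hS hlap

end GradientEstimate

section TwoPhaseEstimate

/-- An increasing modification `s / (1 - κ s / 2)` of the identity, comparable to `s` for
`κ s ≤ 1`, whose logarithm is more concave than `log s`: writing `φ` for that logarithm,
`φ'' = -(1 - κ s) φ' ^ 2`. -/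
noncomputable def saturate (κ s : ℝ) : ℝ := s / (1 - κ / 2 * s)

/-- The derivative of `log (saturate κ s)` in `s`. -/
noncomputable def logSlope (κ s : ℝ) : ℝ := (s * (1 - κ / 2 * s))⁻¹

theorem half_le_one_sub {κ s : ℝ} (h : κ * s ≤ 1) : 1 / 2 ≤ 1 - κ / 2 * s := by linarith

theorem le_saturate {κ s : ℝ} (hκ : 0 ≤ κ) (hs : 0 ≤ s) (h : κ * s ≤ 1) : s ≤ saturate κ s := by
  rw [saturate, le_div_iff₀ (by linarith [half_le_one_sub h])]
  nlinarith [mul_nonneg (mul_nonneg hκ hs) hs]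

theorem saturate_le {κ s : ℝ} (hs : 0 ≤ s) (h : κ * s ≤ 1) : saturate κ s ≤ 2 * s := by
  rw [saturate, div_le_iff₀ (by linarith [half_le_one_sub h])]
  nlinarith

theorem hasTwoJetAt_log_saturate {κ s : ℝ} (hs : s ≠ 0) (h : 1 - κ / 2 * s ≠ 0) :
    HasTwoJetAt (fun t => Real.log t - Real.log (1 - κ / 2 * t)) (logSlope κ s)
      (-((1 - κ * s) * logSlope κ s ^ 2)) s := by
  have hlin (t : ℝ) : HasDerivAt (fun t => 1 - κ / 2 * t) (-(κ / 2)) t := by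
    simpa using ((hasDerivAt_id t).const_mul (κ / 2)).const_sub 1
  have hne : ∀ᶠ t in 𝓝 s, 1 - κ / 2 * t ≠ 0 := (hlin s).continuousAt.eventually_ne h
  refine ⟨logSlope κ, ?_, rfl, ?_⟩
  · filter_upwards [eventually_ne_nhds hs, hne] with t ht ht'
    have hden : 2 - t * κ ≠ 0 := fun h₀ => ht' (by linarith)
    refine ((Real.hasDerivAt_log ht).sub ((hlin t).log ht')).congr_deriv ?_
    unfold logSlope
    field_simp
    ring
  · refine (((hasDerivAt_id s).mul (hlin s)).inv (mul_ne_zero hs h)).congr_deriv ?_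
    simp only [id, Pi.mul_apply, logSlope]
    field_simp
    ring

variable {E : Type*} [NormedAddCommGroup E] [InnerProductSpace ℝ E]

/-- The cut-off `ρ² - |(x + y) / 2 - p|²` of the two-point argument, a function of the midpoint. -/
noncomputable def midWeight (ρ : ℝ) (p x y : E) : ℝ := ρ ^ 2 - ‖(1 / 2 : ℝ) • (x + y) - p‖ ^ 2

/-- Minus the gradient of `2 log (midWeight ρ p x y)`, in either of the variables `x` and `y`. -/
noncomputable def midDrift (ρ : ℝ) (p x y : E) : E :=
  (2 / midWeight ρ p x y) • ((1 / 2 : ℝ) • (x + y) - p)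

/-- The localized two-point quotient `f(x) g(y) / |x - y|²`, with `f` and `g` saturated. -/
noncomputable def twoPointQuotient (f g : E → ℝ) (κ ρ : ℝ) (p x y : E) : ℝ :=
  saturate κ (f x) * saturate κ (g y) * midWeight ρ p x y ^ 2 / ‖x - y‖ ^ 2

/-- The logarithm of `twoPointQuotient`, expanded. -/
noncomputable def twoPointLog (f g : E → ℝ) (κ ρ : ℝ) (p x y : E) : ℝ :=
  (Real.log (f x) - Real.log (1 - κ / 2 * f x)) + (Real.log (g y) - Real.log (1 - κ / 2 * g y)) +
    2 * Real.log (midWeight ρ p x y) - Real.log (‖x - y‖ ^ 2)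

variable {f g : E → ℝ} {κ ρ : ℝ} {p x y : E}

theorem log_twoPointQuotient (hx : 0 < f x) (hy : 0 < g y) (hκx : κ * f x ≤ 1)
    (hκy : κ * g y ≤ 1) (hw : midWeight ρ p x y ≠ 0) (hne : x ≠ y) :
    Real.log (twoPointQuotient f g κ ρ p x y) = twoPointLog f g κ ρ p x y := by
  have hx' : 1 - κ / 2 * f x ≠ 0 := by linarith [half_le_one_sub hκx]
  have hy' : 1 - κ / 2 * g y ≠ 0 := by linarith [half_le_one_sub hκy]
  have hr : ‖x - y‖ ≠ 0 := norm_ne_zero_iff.2 (sub_ne_zero.2 hne)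
  unfold twoPointQuotient twoPointLog saturate
  rw [Real.log_div, Real.log_mul, Real.log_mul, Real.log_div, Real.log_div,
    Real.log_pow (midWeight ρ p x y)]
  · push_cast
    ring
  all_goals positivity

theorem hasTwoJetAt_log_norm_sub_sq_line (hne : x ≠ y) (ξ ζ : E) :
    HasTwoJetAt (fun s : ℝ => Real.log (‖x + s • ξ - (y + s • ζ)‖ ^ 2))
      (2 / ‖x - y‖ ^ 2 * inner ℝ (x - y) (ξ - ζ))
      (2 * ‖ξ - ζ‖ ^ 2 / ‖x - y‖ ^ 2 - 4 * inner ℝ (x - y) (ξ - ζ) ^ 2 / ‖x - y‖ ^ 4) 0 := by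
  have hr : ‖x - y‖ ≠ 0 := norm_ne_zero_iff.2 (sub_ne_zero.2 hne)
  have hlog := HasTwoJetAt.comp (f := fun s : ℝ => ‖(x - y) + s • (ξ - ζ)‖ ^ 2) (t := 0)
    (by simpa using HasTwoJetAt.log (pow_ne_zero 2 hr)) (hasTwoJetAt_norm_sq_line _ _)
  convert hlog using 1
  · ext s
    congr 3
    module
  · field_simp
  · field_simp
    ring

theorem hasTwoJetAt_midWeight_line (ρ : ℝ) (p x y ξ ζ : E) :
    HasTwoJetAt (fun s : ℝ => midWeight ρ p (x + s • ξ) (y + s • ζ))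
      (-inner ℝ ((1 / 2 : ℝ) • (x + y) - p) (ξ + ζ)) (-(‖ξ + ζ‖ ^ 2 / 2)) 0 := by
  convert HasTwoJetAt.quadratic (midWeight ρ p x y)
    (-inner ℝ ((1 / 2 : ℝ) • (x + y) - p) (ξ + ζ)) (-(‖ξ + ζ‖ ^ 2 / 4)) using 1
  · ext s
    have hline : (1 / 2 : ℝ) • (x + s • ξ + (y + s • ζ)) - p =
        ((1 / 2 : ℝ) • (x + y) - p) + (s / 2) • (ξ + ζ) := by module
    rw [midWeight, midWeight, hline, norm_add_sq_real, inner_smul_right, norm_smul, mul_pow,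
      Real.norm_eq_abs, sq_abs]
    ring
  · ring

theorem hasTwoJetAt_log_midWeight_line (hw : midWeight ρ p x y ≠ 0) (ξ ζ : E) :
    HasTwoJetAt (fun s : ℝ => 2 * Real.log (midWeight ρ p (x + s • ξ) (y + s • ζ)))
      (-inner ℝ (midDrift ρ p x y) (ξ + ζ))
      (-(‖ξ + ζ‖ ^ 2 / midWeight ρ p x y + inner ℝ (midDrift ρ p x y) (ξ + ζ) ^ 2 / 2)) 0 := by
  have hlog := (HasTwoJetAt.comp (f := fun s : ℝ => midWeight ρ p (x + s • ξ) (y + s • ζ)) (t := 0)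
    (by simpa using HasTwoJetAt.log hw) (hasTwoJetAt_midWeight_line ρ p x y ξ ζ)).const_mul 2
  rw [midDrift, real_inner_smul_left]
  convert hlog using 1 <;> field_simp
  ring

theorem hasTwoJetAt_log_saturate_line (hf : ContDiff ℝ 2 f) (hx : f x ≠ 0)
    (hκ : 1 - κ / 2 * f x ≠ 0) (ξ : E) :
    HasTwoJetAt (fun s : ℝ => Real.log (f (x + s • ξ)) - Real.log (1 - κ / 2 * f (x + s • ξ)))
      (logSlope κ (f x) * fderiv ℝ f x ξ)
      (logSlope κ (f x) * fderiv ℝ (fderiv ℝ f) x ξ ξ -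
        (1 - κ * f x) * (logSlope κ (f x) * fderiv ℝ f x ξ) ^ 2) 0 := by
  have hlog := HasTwoJetAt.comp (f := fun s : ℝ => f (x + s • ξ)) (t := 0)
    (by simpa using hasTwoJetAt_log_saturate hx hκ) (hasTwoJetAt_line hf.contDiffAt ξ)
  convert hlog using 1
  ring

theorem sub_reflection_orthogonal_singleton (e ξ : E) :
    ξ - (Submodule.span ℝ {e})ᗮ.reflection ξ = (2 * inner ℝ e ξ / ‖e‖ ^ 2) • e := by
  simp only [Submodule.reflection_orthogonal_apply, Submodule.reflection_singleton_apply,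
    RCLike.ofReal_real_eq_id, id]
  module

/-- A pair `(x, y)` of distinct points at which `twoPointLog f g κ ρ p` has a local maximum
and all its arguments are positive, with `f x` and `g y` in the range where `saturate` is comparable
to the identity. -/
structure IsTwoPointMax (f g : E → ℝ) (κ ρ : ℝ) (p x y : E) : Prop where
  left_pos : 0 < f x
  right_pos : 0 < g y
  left_le : κ * f x ≤ 1
  right_le : κ * g y ≤ 1
  weight_pos : 0 < midWeight ρ p x y
  ne : x ≠ y
  isLocalMax : IsLocalMax (fun q : E × E => twoPointLog f g κ ρ p q.1 q.2) (x, y)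

namespace IsTwoPointMax

theorem hasTwoJetAt_twoPointLog (h : IsTwoPointMax f g κ ρ p x y) (hf : ContDiff ℝ 2 f)
    (hg : ContDiff ℝ 2 g) (ξ ζ : E) :
    HasTwoJetAt (fun s : ℝ => twoPointLog f g κ ρ p (x + s • ξ) (y + s • ζ))
      (logSlope κ (f x) * fderiv ℝ f x ξ + logSlope κ (g y) * fderiv ℝ g y ζ -
        inner ℝ (midDrift ρ p x y) (ξ + ζ) - 2 / ‖x - y‖ ^ 2 * inner ℝ (x - y) (ξ - ζ))
      (logSlope κ (f x) * fderiv ℝ (fderiv ℝ f) x ξ ξ -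
        (1 - κ * f x) * (logSlope κ (f x) * fderiv ℝ f x ξ) ^ 2 +
        (logSlope κ (g y) * fderiv ℝ (fderiv ℝ g) y ζ ζ -
          (1 - κ * g y) * (logSlope κ (g y) * fderiv ℝ g y ζ) ^ 2) -
        (‖ξ + ζ‖ ^ 2 / midWeight ρ p x y + inner ℝ (midDrift ρ p x y) (ξ + ζ) ^ 2 / 2) -
        (2 * ‖ξ - ζ‖ ^ 2 / ‖x - y‖ ^ 2 - 4 * inner ℝ (x - y) (ξ - ζ) ^ 2 / ‖x - y‖ ^ 4)) 0 := by
  have hx : 1 - κ / 2 * f x ≠ 0 := by linarith [half_le_one_sub h.left_le]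
  have hy : 1 - κ / 2 * g y ≠ 0 := by linarith [half_le_one_sub h.right_le]
  have hjet := (((hasTwoJetAt_log_saturate_line hf h.left_pos.ne' hx ξ).add
    (hasTwoJetAt_log_saturate_line hg h.right_pos.ne' hy ζ)).add
    (hasTwoJetAt_log_midWeight_line h.weight_pos.ne' ξ ζ)).sub
    (hasTwoJetAt_log_norm_sub_sq_line h.ne ξ ζ)
  simp only [← sub_eq_add_neg] at hjet
  exact hjet

theorem isLocalMax_line (h : IsTwoPointMax f g κ ρ p x y) (ξ ζ : E) :
    IsLocalMax (fun s : ℝ => twoPointLog f g κ ρ p (x + s • ξ) (y + s • ζ)) 0 := by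
  have hline : Tendsto (fun s : ℝ => (x + s • ξ, y + s • ζ)) (𝓝 0) (𝓝 (x, y)) := by
    have : Continuous fun s : ℝ => (x + s • ξ, y + s • ζ) := by fun_prop
    simpa using this.tendsto 0
  filter_upwards [hline.eventually h.isLocalMax] with s hs
  simpa using hs

theorem first_order (h : IsTwoPointMax f g κ ρ p x y) (hf : ContDiff ℝ 2 f)
    (hg : ContDiff ℝ 2 g) (ξ ζ : E) :
    logSlope κ (f x) * fderiv ℝ f x ξ + logSlope κ (g y) * fderiv ℝ g y ζ =
      inner ℝ (midDrift ρ p x y) (ξ + ζ) + 2 / ‖x - y‖ ^ 2 * inner ℝ (x - y) (ξ - ζ) := by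
  have := (h.isLocalMax_line ξ ζ).hasDerivAt_eq_zero
    (h.hasTwoJetAt_twoPointLog hf hg ξ ζ).hasDerivAt
  linarith

theorem logSlope_mul_fderiv_left (h : IsTwoPointMax f g κ ρ p x y) (hf : ContDiff ℝ 2 f)
    (hg : ContDiff ℝ 2 g) (ξ : E) :
    logSlope κ (f x) * fderiv ℝ f x ξ =
      inner ℝ (midDrift ρ p x y + (2 / ‖x - y‖ ^ 2) • (x - y)) ξ := by
  simpa [inner_add_left, real_inner_smul_left] using h.first_order hf hg ξ 0

theorem logSlope_mul_fderiv_right (h : IsTwoPointMax f g κ ρ p x y) (hf : ContDiff ℝ 2 f)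
    (hg : ContDiff ℝ 2 g) (ζ : E) :
    logSlope κ (g y) * fderiv ℝ g y ζ =
      inner ℝ (midDrift ρ p x y - (2 / ‖x - y‖ ^ 2) • (x - y)) ζ := by
  have := h.first_order hf hg 0 ζ
  rw [map_zero, mul_zero, zero_add, zero_add, zero_sub, inner_neg_right] at this
  rw [this, inner_sub_left (midDrift ρ p x y), real_inner_smul_left]
  ring

-- Coupling `ξ` with its mirror image across the hyperplane orthogonal to `x - y`: the term
-- `log |x - y|²` then contributes to the sum over a basis only through the direction `x - y`.
theorem second_order_reflection (h : IsTwoPointMax f g κ ρ p x y) (hf : ContDiff ℝ 2 f)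
    (hg : ContDiff ℝ 2 g) {ξ : E} (hξ : ‖ξ‖ = 1) :
    let ζ := (Submodule.span ℝ {x - y})ᗮ.reflection ξ
    logSlope κ (f x) * fderiv ℝ (fderiv ℝ f) x ξ ξ +
        logSlope κ (g y) * fderiv ℝ (fderiv ℝ g) y ζ ζ +
        8 / ‖x - y‖ ^ 4 * inner ℝ (x - y) ξ ^ 2 ≤
      (1 - κ * f x) * inner ℝ (midDrift ρ p x y + (2 / ‖x - y‖ ^ 2) • (x - y)) ξ ^ 2 +
        (1 - κ * g y) * inner ℝ (midDrift ρ p x y - (2 / ‖x - y‖ ^ 2) • (x - y)) ζ ^ 2 +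
        4 / midWeight ρ p x y +
        (inner ℝ (midDrift ρ p x y) ξ ^ 2 + inner ℝ (midDrift ρ p x y) ζ ^ 2) := by
  intro ζ
  have hr : ‖x - y‖ ≠ 0 := norm_ne_zero_iff.2 (sub_ne_zero.2 h.ne)
  have hη := h.weight_pos
  have hsecond := (h.hasTwoJetAt_twoPointLog hf hg ξ ζ).second_nonpos_of_isLocalMax
    (h.isLocalMax_line ξ ζ)
  have hsub : ξ - ζ = (2 * inner ℝ (x - y) ξ / ‖x - y‖ ^ 2) • (x - y) :=
    sub_reflection_orthogonal_singleton (x - y) ξ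
  have hinner : inner ℝ (x - y) (ξ - ζ) = 2 * inner ℝ (x - y) ξ := by
    rw [hsub, inner_smul_right, real_inner_self_eq_norm_sq]
    field_simp
  have hnorm : ‖ξ - ζ‖ ^ 2 = 4 * inner ℝ (x - y) ξ ^ 2 / ‖x - y‖ ^ 2 := by
    rw [hsub, norm_smul, mul_pow, Real.norm_eq_abs, sq_abs]
    field_simp
    ring
  have hdist : 2 * ‖ξ - ζ‖ ^ 2 / ‖x - y‖ ^ 2 -
      4 * inner ℝ (x - y) (ξ - ζ) ^ 2 / ‖x - y‖ ^ 4 =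
      -(8 / ‖x - y‖ ^ 4 * inner ℝ (x - y) ξ ^ 2) := by
    rw [hinner, hnorm]
    field_simp
    ring
  have hadd : ‖ξ + ζ‖ ^ 2 / midWeight ρ p x y ≤ 4 / midWeight ρ p x y := by
    have hζ : ‖ζ‖ = 1 := by rw [← hξ]; exact LinearIsometryEquiv.norm_map _ ξ
    gcongr
    nlinarith [norm_nonneg (ξ + ζ), norm_add_le ξ ζ]
  have hdrift : inner ℝ (midDrift ρ p x y) (ξ + ζ) ^ 2 / 2 ≤
      inner ℝ (midDrift ρ p x y) ξ ^ 2 + inner ℝ (midDrift ρ p x y) ζ ^ 2 := by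
    rw [inner_add_right]
    nlinarith [sq_nonneg (inner ℝ (midDrift ρ p x y) ξ - inner ℝ (midDrift ρ p x y) ζ)]
  rw [h.logSlope_mul_fderiv_left hf hg, h.logSlope_mul_fderiv_right hf hg, hdist] at hsecond
  linarith

variable [FiniteDimensional ℝ E]

theorem laplacian_add_le (h : IsTwoPointMax f g κ ρ p x y) (hf : ContDiff ℝ 2 f)
    (hg : ContDiff ℝ 2 g) :
    logSlope κ (f x) * Δ f x + logSlope κ (g y) * Δ g y + 8 / ‖x - y‖ ^ 2 ≤
      (1 - κ * f x) * ‖midDrift ρ p x y + (2 / ‖x - y‖ ^ 2) • (x - y)‖ ^ 2 +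
        (1 - κ * g y) * ‖midDrift ρ p x y - (2 / ‖x - y‖ ^ 2) • (x - y)‖ ^ 2 +
        4 * finrank ℝ E / midWeight ρ p x y + 2 * ‖midDrift ρ p x y‖ ^ 2 := by
  have hr : ‖x - y‖ ≠ 0 := norm_ne_zero_iff.2 (sub_ne_zero.2 h.ne)
  let b := stdOrthonormalBasis ℝ E
  let b' := b.map (Submodule.span ℝ {x - y})ᗮ.reflection
  have hparseval (b : OrthonormalBasis (Fin (finrank ℝ E)) ℝ E) (c : E) :
      ∑ i, inner ℝ c (b i) ^ 2 = ‖c‖ ^ 2 := by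
    simpa using b.sum_sq_norm_inner_left c
  have hsum := Finset.sum_le_sum fun i (_ : i ∈ Finset.univ) =>
    h.second_order_reflection hf hg (b.orthonormal.1 i)
  have hb' (i : Fin (finrank ℝ E)) :
      (Submodule.span ℝ {x - y})ᗮ.reflection (b i) = b' i := by simp [b']
  simp only [hb', Finset.sum_add_distrib, ← Finset.mul_sum, hparseval, Finset.sum_const,
    Finset.card_univ, Fintype.card_fin, nsmul_eq_mul, ← laplacian_eq_sum_fderiv_fderiv] at hsum
  calc _ = logSlope κ (f x) * Δ f x + logSlope κ (g y) * Δ g y +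
        8 / ‖x - y‖ ^ 4 * ‖x - y‖ ^ 2 := by field_simp
    _ ≤ _ := hsum
    _ = _ := by ring

theorem laplacian_add_le_of_norm_midDrift_le (h : IsTwoPointMax f g κ ρ p x y)
    (hf : ContDiff ℝ 2 f) (hg : ContDiff ℝ 2 g) (hκ : 0 ≤ κ)
    (hdrift : ‖midDrift ρ p x y‖ ≤ 1 / ‖x - y‖) :
    logSlope κ (f x) * Δ f x + logSlope κ (g y) * Δ g y + κ * (f x + g y) / ‖x - y‖ ^ 2 ≤
      4 * ‖midDrift ρ p x y‖ ^ 2 + 4 * finrank ℝ E / midWeight ρ p x y := by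
  have hr : 0 < ‖x - y‖ := norm_pos_iff.2 (sub_ne_zero.2 h.ne)
  have hlap := h.laplacian_add_le hf hg
  set n := midDrift ρ p x y
  set D := (2 / ‖x - y‖ ^ 2) • (x - y)
  have hD : ‖D‖ = 2 / ‖x - y‖ := by
    rw [norm_smul, Real.norm_of_nonneg (by positivity)]
    field_simp
  have hparallelogram : ‖n + D‖ ^ 2 + ‖n - D‖ ^ 2 = 8 / ‖x - y‖ ^ 2 + 2 * ‖n‖ ^ 2 := by
    rw [norm_add_sq_real, norm_sub_sq_real, hD]
    field_simp
    ring
  have hgap : 1 / ‖x - y‖ ≤ ‖D‖ - ‖n‖ := by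
    rw [hD]
    linarith [show 2 / ‖x - y‖ = 1 / ‖x - y‖ + 1 / ‖x - y‖ by ring]
  have hadd : κ * f x * (1 / ‖x - y‖) ^ 2 ≤ κ * f x * ‖n + D‖ ^ 2 := by
    have := h.left_pos
    gcongr
    linarith [norm_sub_le (n + D) n, congrArg norm (add_sub_cancel_left n D)]
  have hsub : κ * g y * (1 / ‖x - y‖) ^ 2 ≤ κ * g y * ‖n - D‖ ^ 2 := by
    have := h.right_pos
    gcongr
    linarith [norm_sub_le n (n - D), congrArg norm (sub_sub_cancel n D)]
  have hsplit : κ * (f x + g y) / ‖x - y‖ ^ 2 =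
      κ * f x * (1 / ‖x - y‖) ^ 2 + κ * g y * (1 / ‖x - y‖) ^ 2 := by ring
  linarith

end IsTwoPointMax

end TwoPhaseEstimate

section TwoPhaseArithmetic

variable {a b η r M S A ρ : ℝ}

theorem two_div_add_le (ha : 0 < a) (hb : 0 < b) (hr : 0 < r) (hS : 0 < S) (hρ : 0 < ρ)
    (hη : η ^ 2 ≤ ρ ^ 4) (hM : M * r ^ 2 ≤ 4 * (a * b) * η ^ 2) (hMA : 16 * A * ρ ^ 4 * S ≤ M) :
    A * (2 / a) + A * (2 / b) ≤ (a + b) / (2 * S * r ^ 2) := by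
  have hab := mul_pos ha hb
  have hle : 4 * A * S * r ^ 2 ≤ a * b := by
    refine le_of_mul_le_mul_right (a := 4 * ρ ^ 4) ?_ (by positivity)
    calc 4 * A * S * r ^ 2 * (4 * ρ ^ 4) = 16 * A * ρ ^ 4 * S * r ^ 2 := by ring
      _ ≤ M * r ^ 2 := by gcongr
      _ ≤ 4 * (a * b) * η ^ 2 := hM
      _ ≤ 4 * (a * b) * ρ ^ 4 := by gcongr
      _ = a * b * (4 * ρ ^ 4) := by ring
  have hsum : A * (2 / a) + A * (2 / b) = 2 * A * (a + b) / (a * b) := by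
    field_simp
    ring
  rw [hsum, div_le_div_iff₀ hab (by positivity)]
  nlinarith [mul_le_mul_of_nonneg_left hle (add_pos ha hb).le]

theorem four_mul_sq_add_div_le {n ν : ℝ} (hη : 0 < η) (hηρ : η ≤ ρ ^ 2) (hn : 0 ≤ n) (hν : 0 ≤ ν)
    (hν' : ν ≤ 2 * ρ / η) : 4 * ν ^ 2 + 4 * n / η ≤ (16 + 4 * n) * ρ ^ 2 / η ^ 2 := by
  calc 4 * ν ^ 2 + 4 * n / η = 4 * ν ^ 2 + 4 * n * η / η ^ 2 := by field_simp
    _ ≤ 4 * (2 * ρ / η) ^ 2 + 4 * n * ρ ^ 2 / η ^ 2 := by gcongr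
    _ = (16 + 4 * n) * ρ ^ 2 / η ^ 2 := by
      field_simp
      ring

theorem le_of_add_div_le {C : ℝ} (ha : 0 < a) (haS : a ≤ S) (hb : 0 < b) (hbS : b ≤ S)
    (hη : 0 < η) (hr : 0 < r) (hM₀ : 0 ≤ M) (hC : 0 ≤ C)
    (hM : M * r ^ 2 ≤ 4 * (a * b) * η ^ 2) (h : (a + b) / (2 * S * r ^ 2) ≤ C / η ^ 2) :
    M ≤ 4 * S ^ 2 * C := by
  have hS : 0 < S := ha.trans_le haS
  have hsum : (a + b) * η ^ 2 ≤ C * (2 * S * r ^ 2) := by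
    rwa [div_le_div_iff₀ (by positivity) (by positivity)] at h
  have hlower : M * η ^ 2 ≤ 4 * S ^ 2 * C ^ 2 * r ^ 2 := by
    refine le_of_mul_le_mul_right (a := r ^ 2) ?_ (by positivity)
    calc M * η ^ 2 * r ^ 2 = M * r ^ 2 * η ^ 2 := by ring
      _ ≤ 4 * (a * b) * η ^ 2 * η ^ 2 := by gcongr
      _ ≤ ((a + b) * η ^ 2) ^ 2 := by nlinarith [sq_nonneg ((a - b) * η ^ 2)]
      _ ≤ (C * (2 * S * r ^ 2)) ^ 2 := by gcongr
      _ = 4 * S ^ 2 * C ^ 2 * r ^ 2 * r ^ 2 := by ring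
  have hupper : M * r ^ 2 ≤ 4 * (S * S) * η ^ 2 := hM.trans (by gcongr)
  refine le_of_sq_le_sq (le_of_mul_le_mul_right (a := η ^ 2) ?_ (by positivity)) (by positivity)
  calc M ^ 2 * η ^ 2 = M * (M * η ^ 2) := by ring
    _ ≤ M * (4 * S ^ 2 * C ^ 2 * r ^ 2) := by gcongr
    _ = 4 * S ^ 2 * C ^ 2 * (M * r ^ 2) := by ring
    _ ≤ 4 * S ^ 2 * C ^ 2 * (4 * (S * S) * η ^ 2) := by gcongr
    _ = (4 * S ^ 2 * C) ^ 2 * η ^ 2 := by ring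

theorem mul_le_of_sq_mul_le (hb : 0 ≤ b) (haS : a ≤ S) (hbS : b ≤ S) (hη : 0 ≤ η)
    (hS : 0 < S) (hM : M * r ^ 2 ≤ 4 * (a * b) * η ^ 2) (hMS : 16 * S ^ 2 * ρ ^ 2 ≤ M) :
    2 * ρ * r ≤ η := by
  refine le_of_sq_le_sq (le_of_mul_le_mul_left (a := 4 * S ^ 2) ?_ (by positivity)) hη
  calc 4 * S ^ 2 * (2 * ρ * r) ^ 2 = 16 * S ^ 2 * ρ ^ 2 * r ^ 2 := by ring
    _ ≤ M * r ^ 2 := by gcongr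
    _ ≤ 4 * (a * b) * η ^ 2 := hM
    _ ≤ 4 * (S * S) * η ^ 2 := by gcongr
    _ = 4 * S ^ 2 * η ^ 2 := by ring

theorem neg_mul_two_div_le_logSlope_mul {κ s L : ℝ} (hA : 0 ≤ A) (hs : 0 < s) (hκ : κ * s ≤ 1)
    (hL : -A ≤ L) : -(A * (2 / s)) ≤ logSlope κ s * L := by
  have hden := half_le_one_sub hκ
  have hslope : logSlope κ s ≤ 2 / s := by
    rw [logSlope, ← one_div, div_le_div_iff₀ (mul_pos hs (by linarith [hden])) hs]
    nlinarith [hden]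
  have hslope₀ : 0 ≤ logSlope κ s := inv_nonneg.2 (mul_nonneg hs.le (by linarith [hden]))
  nlinarith [mul_le_mul_of_nonneg_left hL hslope₀, mul_le_mul_of_nonneg_left hslope hA]

end TwoPhaseArithmetic

section TwoPhasePair

variable {E : Type*} [NormedAddCommGroup E] [InnerProductSpace ℝ E]
  {f g : E → ℝ} {A S ρ κ : ℝ} {p x y : E}

theorem twoPointQuotient_pos (hx : 0 < f x) (hy : 0 < g y) (hκx : κ * f x ≤ 1)
    (hκy : κ * g y ≤ 1) (hw : midWeight ρ p x y ≠ 0) (hne : x ≠ y) :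
    0 < twoPointQuotient f g κ ρ p x y := by
  have hr : 0 < ‖x - y‖ := norm_pos_iff.2 (sub_ne_zero.2 hne)
  have hsx : 0 < saturate κ (f x) := div_pos hx (by linarith [half_le_one_sub hκx])
  have hsy : 0 < saturate κ (g y) := div_pos hy (by linarith [half_le_one_sub hκy])
  unfold twoPointQuotient
  positivity

theorem le_twoPointQuotient_mul (hκ : 0 ≤ κ) (hx : 0 ≤ f x) (hy : 0 ≤ g y) (hκx : κ * f x ≤ 1)
    (hκy : κ * g y ≤ 1) (hne : x ≠ y) :
    f x * g y * midWeight ρ p x y ^ 2 ≤ twoPointQuotient f g κ ρ p x y * ‖x - y‖ ^ 2 := by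
  have hr : ‖x - y‖ ≠ 0 := norm_ne_zero_iff.2 (sub_ne_zero.2 hne)
  have hsx := le_saturate hκ hx hκx
  rw [twoPointQuotient, div_mul_cancel₀ _ (pow_ne_zero 2 hr)]
  gcongr
  exacts [hx.trans hsx, le_saturate hκ hy hκy]

theorem twoPointQuotient_mul_le (hκ : 0 ≤ κ) (hx : 0 ≤ f x) (hy : 0 ≤ g y) (hκx : κ * f x ≤ 1)
    (hκy : κ * g y ≤ 1) (hne : x ≠ y) :
    twoPointQuotient f g κ ρ p x y * ‖x - y‖ ^ 2 ≤
      4 * (f x * g y) * midWeight ρ p x y ^ 2 := by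
  have hr : ‖x - y‖ ≠ 0 := norm_ne_zero_iff.2 (sub_ne_zero.2 hne)
  rw [twoPointQuotient, div_mul_cancel₀ _ (pow_ne_zero 2 hr)]
  calc saturate κ (f x) * saturate κ (g y) * midWeight ρ p x y ^ 2
      ≤ 2 * f x * (2 * g y) * midWeight ρ p x y ^ 2 := by
        have := hy.trans (le_saturate hκ hy hκy)
        gcongr
        exacts [saturate_le hx hκx, saturate_le hy hκy]
    _ = 4 * (f x * g y) * midWeight ρ p x y ^ 2 := by ring

theorem norm_sub_le_of_midpoint (p x y : E) :
    ‖x - p‖ ≤ ‖(1 / 2 : ℝ) • (x + y) - p‖ + ‖x - y‖ / 2 := by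
  calc ‖x - p‖ = ‖((1 / 2 : ℝ) • (x + y) - p) + (1 / 2 : ℝ) • (x - y)‖ := by
        congr 1
        module
    _ ≤ ‖(1 / 2 : ℝ) • (x + y) - p‖ + ‖(1 / 2 : ℝ) • (x - y)‖ := norm_add_le _ _
    _ = _ := by
        rw [norm_smul (1 / 2 : ℝ) (x - y)]
        norm_num
        ring

theorem norm_midpoint_lt (hρ : 0 ≤ ρ) (h : 0 < midWeight ρ p x y) :
    ‖(1 / 2 : ℝ) • (x + y) - p‖ < ρ :=
  lt_of_pow_lt_pow_left₀ 2 hρ (sub_pos.1 h)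

theorem norm_midDrift_le (hρ : 0 ≤ ρ) (h : 0 < midWeight ρ p x y) :
    ‖midDrift ρ p x y‖ ≤ 2 * ρ / midWeight ρ p x y := by
  rw [midDrift, norm_smul, Real.norm_of_nonneg (by positivity), div_mul_eq_mul_div]
  gcongr
  exact (norm_midpoint_lt hρ h).le

@[fun_prop]
theorem continuous_midWeight (ρ : ℝ) (p : E) :
    Continuous fun q : E × E => midWeight ρ p q.1 q.2 := by
  unfold midWeight
  fun_prop

/-- The pairs over which the two-point quotient is maximized. -/
def twoPointDomain (f g : E → ℝ) (ρ : ℝ) (p : E) : Set (E × E) :=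
  (closedBall p (2 * ρ) ×ˢ closedBall p (2 * ρ)) ∩
    ({q | 0 ≤ f q.1} ∩ ({q | 0 ≤ g q.2} ∩ {q | ‖(1 / 2 : ℝ) • (q.1 + q.2) - p‖ ≤ ρ}))

theorem midWeight_nonneg_of_mem {q : E × E} (hq : q ∈ twoPointDomain f g ρ p) :
    0 ≤ midWeight ρ p q.1 q.2 :=
  sub_nonneg.2 (pow_le_pow_left₀ (norm_nonneg _) hq.2.2.2 2)

theorem pos_of_twoPointQuotient_pos {q : E × E} (hq : q ∈ twoPointDomain f g ρ p)
    (hpos : 0 < twoPointQuotient f g κ ρ p q.1 q.2) :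
    0 < f q.1 ∧ 0 < g q.2 ∧ 0 < midWeight ρ p q.1 q.2 := by
  refine ⟨lt_of_le_of_ne hq.2.1 fun h₀ => ?_, lt_of_le_of_ne hq.2.2.1 fun h₀ => ?_,
    (midWeight_nonneg_of_mem hq).lt_of_ne fun h₀ => ?_⟩ <;>
  simp [twoPointQuotient, saturate, ← h₀] at hpos

variable [FiniteDimensional ℝ E]

/-- Two functions with no common point of nonnegativity in `closedBall p (2 ρ)`, each bounded above
by `S` there and almost subharmonic where it is positive: the data of the two-phase estimate. -/
structure IsTwoPhasePair (f g : E → ℝ) (A S ρ : ℝ) (p : E) : Prop where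
  contDiff_left : ContDiff ℝ 2 f
  contDiff_right : ContDiff ℝ 2 g
  left_le : ∀ z ∈ closedBall p (2 * ρ), f z ≤ S
  right_le : ∀ z ∈ closedBall p (2 * ρ), g z ≤ S
  disjoint : ∀ z ∈ closedBall p (2 * ρ), 0 ≤ f z → g z < 0
  laplacian_left : ∀ z ∈ closedBall p (2 * ρ), 0 < f z → -A ≤ Δ f z
  laplacian_right : ∀ z ∈ closedBall p (2 * ρ), 0 < g z → -A ≤ Δ g z

namespace IsTwoPhasePair

variable {q : E × E}

theorem ne_of_mem (h : IsTwoPhasePair f g A S ρ p) (hq : q ∈ twoPointDomain f g ρ p) :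
    q.1 ≠ q.2 := fun heq => by
  obtain ⟨⟨hx, -⟩, hfx, hgy, -⟩ := hq
  exact (h.disjoint _ hx hfx).not_ge (heq ▸ hgy)

theorem inv_mul_left_le (h : IsTwoPhasePair f g A S ρ p) (hS : 0 < S)
    (hq : q ∈ twoPointDomain f g ρ p) : S⁻¹ * f q.1 ≤ 1 :=
  (inv_mul_le_one₀ hS).2 (h.left_le _ hq.1.1)

theorem inv_mul_right_le (h : IsTwoPhasePair f g A S ρ p) (hS : 0 < S)
    (hq : q ∈ twoPointDomain f g ρ p) : S⁻¹ * g q.2 ≤ 1 :=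
  (inv_mul_le_one₀ hS).2 (h.right_le _ hq.1.2)

theorem exists_isMaxOn (h : IsTwoPhasePair f g A S ρ p) (hS : 0 < S)
    (hne : (twoPointDomain f g ρ p).Nonempty) :
    ∃ q ∈ twoPointDomain f g ρ p, IsMaxOn (fun q => twoPointQuotient f g S⁻¹ ρ p q.1 q.2)
      (twoPointDomain f g ρ p) q := by
  have hf := h.contDiff_left.continuous
  have hg := h.contDiff_right.continuous
  have hcompact : IsCompact (twoPointDomain f g ρ p) :=
    ((isCompact_closedBall p _).prod (isCompact_closedBall p _)).inter_right
      ((isClosed_le (by fun_prop) (by fun_prop)).inter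
        ((isClosed_le (by fun_prop) (by fun_prop)).inter (isClosed_le (by fun_prop) (by fun_prop))))
  refine hcompact.exists_isMaxOn hne ?_
  unfold twoPointQuotient saturate
  refine .div (.mul (.mul (.div ?_ ?_ fun q hq => ?_) (.div ?_ ?_ fun q hq => ?_)) ?_) ?_
    fun q hq => ?_
  any_goals exact Continuous.continuousOn (by fun_prop)
  · linarith [half_le_one_sub (h.inv_mul_left_le hS hq)]
  · linarith [half_le_one_sub (h.inv_mul_right_le hS hq)]
  · exact pow_ne_zero 2 (norm_ne_zero_iff.2 (sub_ne_zero.2 (h.ne_of_mem hq)))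

theorem isTwoPointMax (h : IsTwoPhasePair f g A S ρ p) (hS : 0 < S) (hρ : 0 < ρ)
    (hxy : (x, y) ∈ twoPointDomain f g ρ p)
    (hmax : IsMaxOn (fun q => twoPointQuotient f g S⁻¹ ρ p q.1 q.2) (twoPointDomain f g ρ p) (x, y))
    (hpos : 0 < twoPointQuotient f g S⁻¹ ρ p x y) (hr : ‖x - y‖ ≤ ρ) :
    IsTwoPointMax f g S⁻¹ ρ p x y := by
  obtain ⟨hfx, hgy, hw⟩ := pos_of_twoPointQuotient_pos hxy hpos
  have hκx := h.inv_mul_left_le hS hxy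
  have hκy := h.inv_mul_right_le hS hxy
  have hne := h.ne_of_mem hxy
  have hmid := norm_midpoint_lt hρ.le hw
  have hx : x ∈ ball p (2 * ρ) := by
    rw [mem_ball_iff_norm]
    linarith [norm_sub_le_of_midpoint p x y]
  have hy : y ∈ ball p (2 * ρ) := by
    have := norm_sub_le_of_midpoint p y x
    rw [add_comm y, norm_sub_rev y x] at this
    rw [mem_ball_iff_norm]
    linarith
  have hf := h.contDiff_left.continuous
  have hg := h.contDiff_right.continuous
  have hnear : ∀ᶠ q in 𝓝 (x, y), q ∈ ball p (2 * ρ) ×ˢ ball p (2 * ρ) ∧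
      0 < f q.1 ∧ 0 < g q.2 ∧ 0 < midWeight ρ p q.1 q.2 :=
    ((isOpen_ball.prod isOpen_ball).eventually_mem ⟨hx, hy⟩).and <|
      ((hf.comp continuous_fst).continuousAt.eventually (lt_mem_nhds hfx)).and <|
      ((hg.comp continuous_snd).continuousAt.eventually (lt_mem_nhds hgy)).and <|
      (continuous_midWeight ρ p).continuousAt.eventually (lt_mem_nhds hw)
  refine ⟨hfx, hgy, hκx, hκy, hw, hne, ?_⟩
  filter_upwards [hnear] with q ⟨hq, hfq, hgq, hwq⟩
  have hqD : q ∈ twoPointDomain f g ρ p :=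
    ⟨⟨ball_subset_closedBall hq.1, ball_subset_closedBall hq.2⟩, hfq.le, hgq.le,
      (norm_midpoint_lt hρ.le hwq).le⟩
  have hκq₁ := h.inv_mul_left_le hS hqD
  have hκq₂ := h.inv_mul_right_le hS hqD
  have hqne := h.ne_of_mem hqD
  rw [← log_twoPointQuotient hfq hgq hκq₁ hκq₂ hwq.ne' hqne,
    ← log_twoPointQuotient hfx hgy hκx hκy hw.ne' hne]
  exact Real.log_le_log (twoPointQuotient_pos hfq hgq hκq₁ hκq₂ hwq.ne' hqne) (hmax hqD)

theorem twoPointQuotient_le_of_isTwoPointMax (h : IsTwoPhasePair f g A S ρ p) (hS : 0 < S)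
    (hρ : 0 < ρ) (hA : 0 ≤ A) (hx : x ∈ closedBall p (2 * ρ)) (hy : y ∈ closedBall p (2 * ρ))
    (hmax : IsTwoPointMax f g S⁻¹ ρ p x y) (hr : 2 * ρ * ‖x - y‖ ≤ midWeight ρ p x y)
    (hlarge : 16 * A * ρ ^ 4 * S ≤ twoPointQuotient f g S⁻¹ ρ p x y) :
    twoPointQuotient f g S⁻¹ ρ p x y ≤ 4 * S ^ 2 * ((16 + 4 * finrank ℝ E) * ρ ^ 2) := by
  obtain ⟨hfx, hgy, hκx, hκy, hw, hne, -⟩ := id hmax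
  have hfS := h.left_le x hx
  have hgS := h.right_le y hy
  have hr₀ : 0 < ‖x - y‖ := norm_pos_iff.2 (sub_ne_zero.2 hne)
  set η := midWeight ρ p x y
  have hηρ : η ≤ ρ ^ 2 := sub_le_self _ (sq_nonneg _)
  have hquot := twoPointQuotient_mul_le (ρ := ρ) (p := p) (inv_nonneg.2 hS.le) hfx.le hgy.le
    hκx hκy hne
  have hdrift : ‖midDrift ρ p x y‖ ≤ 2 * ρ / η := norm_midDrift_le hρ.le hw
  have hdrift' : 2 * ρ / η ≤ 1 / ‖x - y‖ := by rwa [div_le_div_iff₀ hw hr₀, one_mul]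
  have hlap := hmax.laplacian_add_le_of_norm_midDrift_le h.contDiff_left h.contDiff_right
    (inv_nonneg.2 hS.le) (hdrift.trans hdrift')
  have hlap_f := neg_mul_two_div_le_logSlope_mul hA hfx hκx (h.laplacian_left x hx hfx)
  have hlap_g := neg_mul_two_div_le_logSlope_mul hA hgy hκy (h.laplacian_right y hy hgy)
  have habsorb := two_div_add_le (A := A) hfx hgy hr₀ hS hρ (by nlinarith : η ^ 2 ≤ ρ ^ 4) hquot
    hlarge
  have hright := four_mul_sq_add_div_le hw hηρ (Nat.cast_nonneg (finrank ℝ E)) (norm_nonneg _)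
    hdrift
  have hleft : S⁻¹ * (f x + g y) / ‖x - y‖ ^ 2 =
      2 * ((f x + g y) / (2 * S * ‖x - y‖ ^ 2)) := by field_simp
  exact le_of_add_div_le hfx hfS hgy hgS hw hr₀ (le_trans (by positivity) hlarge)
    (by positivity) hquot (by linarith)

theorem twoPointQuotient_le (h : IsTwoPhasePair f g A S ρ p) (hS : 0 < S) (hρ : 0 < ρ)
    (hA : 0 ≤ A) (hxy : (x, y) ∈ twoPointDomain f g ρ p)
    (hmax : IsMaxOn (fun q => twoPointQuotient f g S⁻¹ ρ p q.1 q.2) (twoPointDomain f g ρ p)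
      (x, y)) :
    twoPointQuotient f g S⁻¹ ρ p x y ≤
      16 * ((finrank ℝ E + 5) * S ^ 2 + A * S * ρ ^ 2) * ρ ^ 2 := by
  by_contra! hlarge
  have hAS : 0 ≤ A * S * ρ ^ 4 := by positivity
  have hSρ : 0 ≤ S ^ 2 * ρ ^ 2 := by positivity
  have hnSρ : 0 ≤ finrank ℝ E * (S ^ 2 * ρ ^ 2) := by positivity
  have hM₀ : 0 < twoPointQuotient f g S⁻¹ ρ p x y := lt_of_le_of_lt (by positivity) hlarge
  obtain ⟨hfx, hgy, hw⟩ := pos_of_twoPointQuotient_pos hxy hM₀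
  have hquot := twoPointQuotient_mul_le (ρ := ρ) (p := p) (inv_nonneg.2 hS.le) hfx.le hgy.le
    (h.inv_mul_left_le hS hxy) (h.inv_mul_right_le hS hxy) (h.ne_of_mem hxy)
  have hr : 2 * ρ * ‖x - y‖ ≤ midWeight ρ p x y :=
    mul_le_of_sq_mul_le hgy.le (h.left_le x hxy.1.1) (h.right_le y hxy.1.2) hw.le hS hquot
      (by nlinarith)
  have hwρ : midWeight ρ p x y ≤ ρ ^ 2 := sub_le_self _ (sq_nonneg _)
  have hlocal := h.isTwoPointMax hS hρ hxy hmax hM₀ (by nlinarith)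
  have hupper := h.twoPointQuotient_le_of_isTwoPointMax hS hρ hA hxy.1.1 hxy.1.2 hlocal hr
    (by nlinarith)
  nlinarith

theorem mul_le (h : IsTwoPhasePair f g A S ρ p) (hS : 0 < S) (hρ : 0 < ρ) (hA : 0 ≤ A)
    (hx : x ∈ closedBall p (ρ / 2)) (hy : y ∈ closedBall p (ρ / 2)) (hfx : 0 ≤ f x)
    (hgy : 0 ≤ g y) :
    f x * g y ≤ 32 * ((finrank ℝ E + 5) * S ^ 2 + A * S * ρ ^ 2) / ρ ^ 2 * ‖x - y‖ ^ 2 := by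
  have hmid : ‖(1 / 2 : ℝ) • (x + y) - p‖ ≤ ρ / 2 := by
    have hmem := (convex_closedBall p (ρ / 2)).midpoint_mem hx hy
    rwa [midpoint_eq_smul_add, invOf_eq_inv, ← one_div, mem_closedBall_iff_norm] at hmem
  have hxy : (x, y) ∈ twoPointDomain f g ρ p :=
    ⟨⟨closedBall_subset_closedBall (by linarith) hx, closedBall_subset_closedBall (by linarith) hy⟩,
      hfx, hgy, hmid.trans (by linarith)⟩
  obtain ⟨q, hq, hmax⟩ := h.exists_isMaxOn hS ⟨_, hxy⟩
  have hweight : 3 / 4 * ρ ^ 2 ≤ midWeight ρ p x y := by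
    unfold midWeight
    nlinarith [norm_nonneg ((1 / 2 : ℝ) • (x + y) - p)]
  rw [div_mul_eq_mul_div, le_div_iff₀ (by positivity)]
  refine le_of_mul_le_mul_right (a := 9 / 16 * ρ ^ 2) ?_ (by positivity)
  calc f x * g y * ρ ^ 2 * (9 / 16 * ρ ^ 2) = f x * g y * (3 / 4 * ρ ^ 2) ^ 2 := by ring
    _ ≤ f x * g y * midWeight ρ p x y ^ 2 := by gcongr
    _ ≤ twoPointQuotient f g S⁻¹ ρ p x y * ‖x - y‖ ^ 2 :=
      le_twoPointQuotient_mul (inv_nonneg.2 hS.le) hfx hgy (h.inv_mul_left_le hS hxy)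
        (h.inv_mul_right_le hS hxy) (h.ne_of_mem hxy)
    _ ≤ 16 * ((finrank ℝ E + 5) * S ^ 2 + A * S * ρ ^ 2) * ρ ^ 2 * ‖x - y‖ ^ 2 := by
      gcongr
      exact (hmax hxy).trans (h.twoPointQuotient_le hS hρ hA hq hmax)
    _ ≤ 18 * ((finrank ℝ E + 5) * S ^ 2 + A * S * ρ ^ 2) * ρ ^ 2 * ‖x - y‖ ^ 2 := by
      gcongr
      norm_num
    _ = _ := by ring

end IsTwoPhasePair

end TwoPhasePair

section Hopf

variable {E : Type*} [NormedAddCommGroup E] [InnerProductSpace ℝ E]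

theorem contDiff_exp_neg_mul_norm_sub_sq (μ : ℝ) (x : E) :
    ContDiff ℝ 2 fun z => Real.exp (-μ * ‖z - x‖ ^ 2) :=
  (contDiff_const.mul ((contDiff_id.sub contDiff_const).norm_sq ℝ)).exp

theorem norm_fderiv_norm_sub_sq (x z : E) :
    ‖fderiv ℝ (fun y => ‖y - x‖ ^ 2) z‖ = 2 * ‖z - x‖ := by
  have hderiv : HasFDerivAt (fun y => ‖y - x‖ ^ 2) (2 • innerSL ℝ (z - x)) z := by
    simpa using ((hasFDerivAt_id z).sub_const x).norm_sq
  rw [hderiv.fderiv, two_nsmul, ← two_smul ℝ, norm_smul, innerSL_apply_norm, Real.norm_ofNat]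

variable [FiniteDimensional ℝ E]

theorem laplacian_exp_neg_mul_norm_sub_sq (μ : ℝ) (x z : E) :
    Δ (fun z => Real.exp (-μ * ‖z - x‖ ^ 2)) z =
      Real.exp (-μ * ‖z - x‖ ^ 2) * (4 * μ ^ 2 * ‖z - x‖ ^ 2 - 2 * μ * finrank ℝ E) := by
  have hderiv (t : ℝ) : HasDerivAt (fun t => Real.exp (-μ * t)) (Real.exp (-μ * t) * -μ) t := by
    simpa using ((hasDerivAt_id t).const_mul (-μ)).exp
  have hjet (t : ℝ) : HasTwoJetAt (fun t => Real.exp (-μ * t)) (Real.exp (-μ * t) * -μ)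
      (Real.exp (-μ * t) * -μ * -μ) t :=
    ⟨_, .of_forall hderiv, rfl, (hderiv t).mul_const (-μ)⟩
  have hnorm : ContDiff ℝ 2 fun y => ‖y - x‖ ^ 2 := (contDiff_id.sub contDiff_const).norm_sq ℝ
  rw [laplacian_comp (G := fun t => Real.exp (-μ * t)) (by fun_prop) (hjet _) hnorm.contDiffAt,
    laplacian_norm_sub_sq,
    norm_fderiv_norm_sub_sq]
  ring

/-- The rate `l` of the barrier `exp (-l ‖z - x‖² / d²)` used in Hopf's lemma, in dimension `n`. -/
def hopfRate (n : ℕ) : ℝ := 256 * (n + 1)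

/-- The constant of the quantitative Hopf lemma in dimension `n`. -/
noncomputable def hopfConst (n : ℕ) : ℝ :=
  hopfRate n * Real.exp (-hopfRate n) / 4 ^ (n + 1)

theorem hopfRate_pos (n : ℕ) : 0 < hopfRate n := by
  unfold hopfRate
  positivity

theorem hopfConst_pos (n : ℕ) : 0 < hopfConst n := by
  have := hopfRate_pos n
  unfold hopfConst
  positivity

variable {w : E → ℝ} {x z : E} {A d k s : ℝ}

local notation "rate" => hopfRate (finrank ℝ E)

theorem le_laplacian_exp_neg_mul_norm_sub_sq (hd : 0 < d) (hz : z ∈ closedBall x d)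
    (hz' : d / 16 ≤ dist z x) :
    2 * rate * Real.exp (-rate) / d ^ 2 ≤
      Δ (fun z => Real.exp (-(rate / d ^ 2) * ‖z - x‖ ^ 2)) z := by
  have hl := hopfRate_pos (finrank ℝ E)
  rw [mem_closedBall_iff_norm] at hz
  rw [dist_eq_norm] at hz'
  have hinner : (d / 16) ^ 2 ≤ ‖z - x‖ ^ 2 := by gcongr
  have hexp : Real.exp (-rate) ≤ Real.exp (-(rate / d ^ 2) * ‖z - x‖ ^ 2) := by
    rw [neg_mul, Real.exp_le_exp, neg_le_neg_iff, div_mul_eq_mul_div]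
    refine div_le_of_le_mul₀ (by positivity) hl.le ?_
    gcongr
  have hfactor : 2 * rate / d ^ 2 ≤
      4 * (rate / d ^ 2) ^ 2 * ‖z - x‖ ^ 2 - 2 * (rate / d ^ 2) * finrank ℝ E := by
    have hsq : 4 * (rate / d ^ 2) ^ 2 * (d / 16) ^ 2 ≤
        4 * (rate / d ^ 2) ^ 2 * ‖z - x‖ ^ 2 := by gcongr
    have hrate : 4 * (rate / d ^ 2) ^ 2 * (d / 16) ^ 2 =
        4 * (rate / d ^ 2) * (finrank ℝ E + 1) := by
      rw [hopfRate]
      field_simp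
      ring
    have hμ : 0 < rate / d ^ 2 := by positivity
    have hn : (0 : ℝ) ≤ finrank ℝ E := Nat.cast_nonneg _
    rw [mul_div_assoc]
    nlinarith [mul_nonneg hμ.le hn]
  rw [laplacian_exp_neg_mul_norm_sub_sq]
  calc 2 * rate * Real.exp (-rate) / d ^ 2 = Real.exp (-rate) * (2 * rate / d ^ 2) := by ring
    _ ≤ _ := by gcongr

theorem mul_exp_sub_exp_le_of_laplacian_le (hw : ContDiff ℝ 2 w) (hd : 0 < d) (hk₀ : 0 ≤ k)
    (hw₀ : ∀ z ∈ closedBall x d, 0 ≤ w z) (hlap : ∀ z ∈ closedBall x d, Δ w z ≤ A)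
    (hk : ∀ z ∈ closedBall x (d / 16), k ≤ w z)
    (hA : A * d ^ 2 < k * (2 * rate * Real.exp (-rate)))
    (hz : z ∈ closedBall x d) (hz' : d / 16 ≤ dist z x) :
    k * (Real.exp (-(rate / d ^ 2) * ‖z - x‖ ^ 2) - Real.exp (-rate)) ≤ w z := by
  have hl := hopfRate_pos (finrank ℝ E)
  have hexp := contDiff_exp_neg_mul_norm_sub_sq (rate / d ^ 2) x
  have hβ := (hexp.sub contDiff_const).const_smul k
    (f := fun z => Real.exp (-(rate / d ^ 2) * ‖z - x‖ ^ 2) - Real.exp (-rate))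
  rw [← sub_nonpos]
  refine le_of_laplacian_pos (K := closedBall x d ∩ {z | d / 16 ≤ dist z x})
    (O := ball x d ∩ {z | d / 16 < dist z x}) (hβ.sub hw)
    ((isCompact_closedBall _ _).inter_right (isClosed_le continuous_const (by fun_prop)))
    (isOpen_ball.inter (isOpen_lt continuous_const (by fun_prop)))
    (inter_subset_inter ball_subset_closedBall fun z hz => le_of_lt (a := d / 16) hz) ?_ ?_
    ⟨hz, hz'⟩
  · rintro y ⟨hy, hy'⟩
    have hlap_exp := le_laplacian_exp_neg_mul_norm_sub_sq hd (ball_subset_closedBall hy)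
      (le_of_lt (a := d / 16) hy')
    have hA' : A < k * (2 * rate * Real.exp (-rate) / d ^ 2) := by
      rwa [← mul_div_assoc, lt_div_iff₀ (by positivity)]
    rw [laplacian_sub hβ.contDiffAt hw.contDiffAt]
    simp only [smul_eq_mul]
    rw [laplacian_const_mul _ (hexp.sub contDiff_const).contDiffAt,
      laplacian_sub_const hexp.contDiffAt]
    nlinarith [hlap y (ball_subset_closedBall hy), mul_le_mul_of_nonneg_left hlap_exp hk₀]
  · rintro y ⟨⟨hy, -⟩, hyO⟩
    rw [smul_eq_mul, sub_nonpos]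
    by_cases hyd : dist y x < d
    · have hky := hk y (mem_closedBall.2 (not_lt.1 fun h => hyO ⟨hyd, h⟩))
      have hle_one : Real.exp (-(rate / d ^ 2) * ‖y - x‖ ^ 2) ≤ 1 := by
        rw [neg_mul, Real.exp_le_one_iff, neg_nonpos]
        positivity
      nlinarith [Real.exp_pos (-rate)]
    · have hnorm : ‖y - x‖ = d := by
        rw [← dist_eq_norm]
        exact le_antisymm hy (not_lt.1 hyd)
      rw [hnorm, neg_mul, div_mul_cancel₀ _ (by positivity), sub_self, mul_zero]
      exact hw₀ y hy

theorem mul_div_le_exp_sub_exp {l : ℝ} (hl : 0 ≤ l) (hd : 0 < d) (hs : 0 ≤ s) (hsd : s ≤ d) :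
    l * Real.exp (-l) * s / d ≤ Real.exp (-(l / d ^ 2) * (d - s) ^ 2) - Real.exp (-l) := by
  have hexponent : -(l / d ^ 2) * (d - s) ^ 2 = -l + l / d ^ 2 * (2 * d * s - s ^ 2) := by
    field_simp
    ring
  have hle : l * s / d ≤ l / d ^ 2 * (2 * d * s - s ^ 2) := by
    calc l * s / d = l / d ^ 2 * (d * s) := by field_simp
      _ ≤ l / d ^ 2 * (2 * d * s - s ^ 2) := by
        gcongr
        nlinarith
  have hexp := hle.trans (le_sub_iff_add_le.2 (Real.add_one_le_exp _))
  rw [hexponent, Real.exp_add]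
  calc l * Real.exp (-l) * s / d = Real.exp (-l) * (l * s / d) := by ring
    _ ≤ Real.exp (-l) * (Real.exp (l / d ^ 2 * (2 * d * s - s ^ 2)) - 1) := by gcongr
    _ = _ := by ring

theorem mul_le_of_le_on_closedBall (hw : ContDiff ℝ 2 w) (hd : 0 < d) (hA : 0 ≤ A)
    (hw₀ : ∀ z ∈ closedBall x d, 0 ≤ w z) (hlap : ∀ z ∈ closedBall x d, Δ w z ≤ A)
    (hk : ∀ z ∈ closedBall x (d / 16), k ≤ w z) (hs : 0 ≤ s) (hsd : s ≤ d / 4)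
    (hz : dist z x = d - s) :
    k * (rate * Real.exp (-rate) * s / d) ≤ w z + A * d * s := by
  have hl := hopfRate_pos (finrank ℝ E)
  have hzd : z ∈ closedBall x d := mem_closedBall.2 (by linarith)
  have hwz := hw₀ z hzd
  have hAds : 0 ≤ A * d * s := by positivity
  rcases le_or_gt k 0 with hk₀ | hk₀
  · exact (mul_nonpos_of_nonpos_of_nonneg hk₀ (by positivity)).trans (by positivity)
  rcases lt_or_ge (A * d ^ 2) (k * (2 * rate * Real.exp (-rate))) with hlarge | hsmall
  · have hbarrier := mul_exp_sub_exp_le_of_laplacian_le hw hd hk₀.le hw₀ hlap hk hlarge hzd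
      (by linarith)
    rw [← dist_eq_norm, hz] at hbarrier
    have hlower := mul_le_mul_of_nonneg_left
      (mul_div_le_exp_sub_exp hl.le hd hs (by linarith)) hk₀.le
    linarith
  · calc k * (rate * Real.exp (-rate) * s / d)
        = k * (2 * rate * Real.exp (-rate)) * (s / (2 * d)) := by
          field_simp
      _ ≤ A * d ^ 2 * (s / (2 * d)) := by gcongr
      _ = A * d * s / 2 := by field_simp
      _ ≤ w z + A * d * s := by linarith

variable [MeasurableSpace E] [BorelSpace E]

theorem hopf (hw : ContDiff ℝ 2 w) (hd : 0 < d) (hw₀ : ∀ z ∈ closedBall x d, 0 ≤ w z)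
    (hlap : ∀ z ∈ closedBall x d, |Δ w z| ≤ A) (hs : 0 ≤ s) (hsd : s ≤ d / 4)
    (hz : dist z x = d - s) :
    hopfConst (finrank ℝ E) * w x * s / d ≤ w z + 2 * A * d * s := by
  have hA : 0 ≤ A := (abs_nonneg _).trans (hlap x (mem_closedBall_self hd.le))
  have hl := hopfRate_pos (finrank ℝ E)
  have hinner : ∀ q ∈ closedBall x (d / 16),
      w x / 4 ^ (finrank ℝ E + 1) - A * (d / 16) ^ 2 ≤ w q := fun q hq => by
    have hsub : closedBall q (4 * (d / 16)) ⊆ closedBall x d :=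
      closedBall_subset_closedBall' (by linarith [mem_closedBall.1 hq])
    rw [sub_le_iff_le_add, div_le_iff₀' (by positivity)]
    exact harnack hw (by positivity) (fun z hz => hlap z (hsub hz)) (fun z hz => hw₀ z (hsub hz))
      (mem_closedBall_comm.1 hq)
  have hbarrier := mul_le_of_le_on_closedBall hw hd hA hw₀ (fun z hz => (abs_le.1 (hlap z hz)).2)
    hinner hs hsd hz
  have hle_one : rate * Real.exp (-rate) ≤ 1 := by
    rw [Real.exp_neg, ← div_eq_mul_inv, div_le_one (Real.exp_pos _)]
    linarith [Real.add_one_le_exp (rate)]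
  have herror : A * (d / 16) ^ 2 * (rate * Real.exp (-rate) * s / d) ≤ A * d * s := by
    calc A * (d / 16) ^ 2 * (rate * Real.exp (-rate) * s / d)
        = A * d * s / 256 * (rate * Real.exp (-rate)) := by
          field_simp
          ring
      _ ≤ A * d * s / 256 * 1 := by gcongr
      _ ≤ A * d * s := by linarith [mul_nonneg (mul_nonneg hA hd.le) hs]
  have hmain : hopfConst (finrank ℝ E) * w x * s / d =
      w x / 4 ^ (finrank ℝ E + 1) * (rate * Real.exp (-rate) * s / d) := by
    rw [hopfConst]
    ring
  linarith

end Hopf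

section TransitionLayer

variable {E : Type*} [NormedAddCommGroup E] [InnerProductSpace ℝ E]
  {v : E → ℝ} {A S C₀ ε r s : ℝ} {p x y y₀ z : E}

theorem exists_dist_eq_sub (hs : 0 ≤ s) (hsd : s ≤ dist x y) (hd : 0 < dist x y) :
    ∃ z, dist z y = s ∧ dist z x = dist x y - s := by
  refine ⟨AffineMap.lineMap y x (s / dist x y), ?_, ?_⟩
  · rw [dist_lineMap_left, Real.norm_of_nonneg (by positivity), dist_comm y,
      div_mul_cancel₀ _ hd.ne']
  · rw [dist_lineMap_right, Real.norm_of_nonneg (sub_nonneg.2 (div_le_one_of_le₀ hsd hd.le)),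
      dist_comm y, sub_mul, div_mul_cancel₀ _ hd.ne', one_mul]

theorem mul_le_of_le_min {B H a d : ℝ} (hε : 0 < ε) (hd : 0 < d) (hH : 0 ≤ H) (hB : 0 ≤ B)
    (hA : 0 ≤ A) (hdr : d ≤ r) (hs : s = min ε d / 4)
    (h : a * s / d ≤ H * (2 * ε + B * s) + 2 * A * d * s) :
    a ≤ (H * (8 + B) + 2 * A * r) * (d + ε) := by
  have hs₀ : 0 < s := hs ▸ div_pos (lt_min hε hd) (by norm_num)
  have hmin : ε * d ≤ 4 * s * (d + ε) := by
    rcases le_total ε d with hle | hle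
    · rw [hs, min_eq_left hle]
      nlinarith
    · rw [hs, min_eq_right hle]
      nlinarith
  refine le_of_mul_le_mul_right ?_ hs₀
  calc a * s = d * (a * s / d) := by field_simp
    _ ≤ d * (H * (2 * ε + B * s) + 2 * A * d * s) := by gcongr
    _ = H * (2 * (ε * d) + B * (d * s)) + 2 * A * d * (d * s) := by ring
    _ ≤ H * (2 * (4 * s * (d + ε)) + B * ((d + ε) * s)) + 2 * A * r * ((d + ε) * s) := by
      have hdε : d ≤ d + ε := by linarith
      have hr : 0 ≤ r := hd.le.trans hdr
      gcongr
    _ = (H * (8 + B) + 2 * A * r) * (d + ε) * s := by ring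

variable [FiniteDimensional ℝ E]

/-- A regularized two-phase function on `s`: its Laplacian is bounded by `A` outside the transition
layer `|v| < ε`, and by `A / ε` inside. -/
structure HasTransitionLayer (v : E → ℝ) (A ε : ℝ) (s : Set E) : Prop where
  contDiff : ContDiff ℝ 2 v
  pos : 0 < ε
  abs_laplacian_le_div : ∀ z ∈ s, |Δ v z| ≤ A / ε
  abs_laplacian_le : ∀ z ∈ s, ε ≤ |v z| → |Δ v z| ≤ A

theorem exists_nearest_le (hv : Continuous v) (hy : v y ≤ ε) (hx : ε < v x) :
    ∃ y₀, v y₀ ≤ ε ∧ dist x y₀ ≤ dist x y ∧ ∀ z ∈ closedBall x (dist x y₀), ε ≤ v z := by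
  obtain ⟨y₀, hy₀, hdist⟩ :=
    (isClosed_le hv continuous_const : IsClosed {z | v z ≤ ε}).exists_infDist_eq_dist ⟨y, hy⟩ x
  have hne : dist x y₀ ≠ 0 := dist_ne_zero.2 fun heq => hx.not_ge (heq ▸ hy₀)
  have hball : ball x (dist x y₀) ⊆ {z | ε ≤ v z} := fun z hz => by
    by_contra hvz
    have hlt : v z < ε := not_le.1 hvz
    have hle : infDist x {z | v z ≤ ε} ≤ dist x z := infDist_le_dist_of_mem hlt.le
    exact (mem_ball'.1 hz).not_ge (hdist ▸ hle)
  refine ⟨y₀, hy₀, hdist ▸ infDist_le_dist_of_mem hy, ?_⟩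
  rw [← closure_ball x hne]
  exact closure_minimal hball (isClosed_le continuous_const hv)

namespace HasTransitionLayer

theorem mono {t u : Set E} (h : HasTransitionLayer v A ε t) (hut : u ⊆ t) :
    HasTransitionLayer v A ε u :=
  ⟨h.contDiff, h.pos, fun z hz => h.abs_laplacian_le_div z (hut hz),
    fun z hz => h.abs_laplacian_le z (hut hz)⟩

theorem neg {t : Set E} (h : HasTransitionLayer v A ε t) :
    HasTransitionLayer (fun z => -v z) A ε t := by
  have hΔ (z : E) : Δ (fun z => -v z) z = -Δ v z := by
    simpa using laplacian_const_mul (-1) h.contDiff.contDiffAt (x := z)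
  exact ⟨h.contDiff.neg, h.pos, by simpa [hΔ] using h.abs_laplacian_le_div,
    by simpa [hΔ] using h.abs_laplacian_le⟩

theorem nonneg {t : Set E} (h : HasTransitionLayer v A ε t) (hz : z ∈ t) : 0 ≤ A := by
  have hdiv := (abs_nonneg _).trans (h.abs_laplacian_le_div z hz)
  simpa [h.pos.ne'] using mul_nonneg hdiv h.pos.le

theorem isTwoPhasePair (h : HasTransitionLayer v A ε (closedBall p (2 * r)))
    (hS : ∀ z ∈ closedBall p (2 * r), |v z| ≤ S) :
    IsTwoPhasePair (fun z => v z - ε) (fun z => -v z - ε) A S r p where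
  contDiff_left := h.contDiff.sub contDiff_const
  contDiff_right := h.neg.contDiff.sub contDiff_const
  left_le z hz := by linarith [(abs_le.1 (hS z hz)).2, h.pos]
  right_le z hz := by linarith [(abs_le.1 (hS z hz)).1, h.pos]
  disjoint z _ hf := by linarith [h.pos]
  laplacian_left z hz hf := by
    rw [laplacian_sub_const h.contDiff.contDiffAt]
    exact (abs_le.1 (h.abs_laplacian_le z hz (le_abs.2 (.inl (by linarith))))).1
  laplacian_right z hz hg := by
    rw [laplacian_sub_const h.neg.contDiff.contDiffAt]
    refine (abs_le.1 (h.neg.abs_laplacian_le z hz ?_)).1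
    rw [abs_neg]
    exact le_abs.2 (.inr (by linarith))

variable [MeasurableSpace E] [BorelSpace E]

theorem sub_le_of_neg_le (h : HasTransitionLayer v A ε (closedBall y₀ (4 * s))) (hC₀ : 0 ≤ C₀)
    (hs : 0 < s) (hsε : s ≤ ε) (hz : z ∈ closedBall y₀ s) (hy₀ : v y₀ ≤ ε)
    (hlower : ∀ y ∈ closedBall y₀ (4 * s), -(ε + C₀ * s) ≤ v y) :
    v z - ε ≤ 4 ^ (finrank ℝ E + 1) * (2 * ε + (C₀ + A) * s) := by
  have hε := h.pos
  have hA := h.nonneg (mem_closedBall_self (by positivity))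
  have hharnack := harnack (w := fun z => v z - -(ε + C₀ * s))
    (h.contDiff.sub contDiff_const) hs
    (fun z hz => by
      rw [laplacian_sub_const h.contDiff.contDiffAt]
      exact h.abs_laplacian_le_div z hz)
    (fun z hz => sub_nonneg.2 (hlower z hz)) hz
  have hlayer : A / ε * s ^ 2 ≤ A * s := by
    calc A / ε * s ^ 2 ≤ A / ε * (s * ε) := by
          rw [sq]
          gcongr
      _ = A * s := by field_simp
  have hC₀s : 0 ≤ C₀ * s := by positivity
  calc v z - ε ≤ v z - -(ε + C₀ * s) := by linarith
    _ ≤ _ := hharnack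
    _ ≤ _ := mul_le_mul_of_nonneg_left (by linarith) (by positivity)

theorem sub_le_of_mul_le (h : HasTransitionLayer v A ε (closedBall y₀ (4 * s))) (hC₀ : 0 ≤ C₀)
    (hs : 0 < s) (hsε : s ≤ ε) (hz : z ∈ closedBall y₀ s) (hy₀ : v y₀ ≤ ε)
    (hpair : ∀ y ∈ closedBall y₀ (4 * s), ε ≤ v z → v y ≤ -ε →
      (v z - ε) * (-v y - ε) ≤ C₀ * ‖z - y‖ ^ 2) :
    v z - ε ≤ 4 ^ (finrank ℝ E + 1) * (2 * ε + (1 + 25 * C₀ + A) * s) := by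
  have hA := h.nonneg (mem_closedBall_self (by positivity))
  have hH : (1 : ℝ) ≤ 4 ^ (finrank ℝ E + 1) := one_le_pow₀ (by norm_num)
  rcases le_or_gt (v z - ε) s with hsmall | hlarge
  · have hε := h.pos
    calc v z - ε ≤ 1 * (2 * 0 + (1 + 25 * 0 + 0) * s) := by linarith
      _ ≤ _ := by gcongr
  have hlower : ∀ y ∈ closedBall y₀ (4 * s), -(ε + 25 * C₀ * s) ≤ v y := fun y hy => by
    by_contra! hvy
    have hC₀s : 0 ≤ 25 * C₀ * s := by positivity
    have hzy : ‖z - y‖ ≤ 5 * s := by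
      rw [← dist_eq_norm]
      linarith [dist_triangle_right z y y₀, mem_closedBall.1 hz, mem_closedBall.1 hy]
    have hprod : s * (-v y - ε) ≤ s * (25 * C₀ * s) := by
      calc s * (-v y - ε) ≤ (v z - ε) * (-v y - ε) := by
            gcongr
            linarith
        _ ≤ C₀ * ‖z - y‖ ^ 2 := hpair y hy (by linarith) (by linarith)
        _ ≤ C₀ * (5 * s) ^ 2 := by gcongr
        _ = s * (25 * C₀ * s) := by ring
    linarith [le_of_mul_le_mul_left hprod hs]
  calc v z - ε ≤ 4 ^ (finrank ℝ E + 1) * (2 * ε + (25 * C₀ + A) * s) :=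
        h.sub_le_of_neg_le (by positivity) hs hsε hz hy₀ hlower
    _ ≤ _ := by
      gcongr
      linarith

/-- The constant in the linear growth estimate, given the constant `C₀` of the two-phase
estimate. -/
noncomputable def growthConst (n : ℕ) (A C₀ r : ℝ) : ℝ :=
  (4 ^ (n + 1) * (9 + 25 * C₀ + A) + 2 * A * r) / hopfConst n + 1

theorem sub_le_of_hopf (h : HasTransitionLayer v A ε (closedBall p r)) (hC₀ : 0 ≤ C₀)
    (hpair : ∀ x ∈ closedBall p (r / 4), ∀ y ∈ closedBall p (r / 4), ε ≤ v x → v y ≤ -ε →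
      (v x - ε) * (-v y - ε) ≤ C₀ * ‖x - y‖ ^ 2)
    (hx : x ∈ closedBall p (r / 32)) (hy₀ : v y₀ ≤ ε) (hd : 0 < dist x y₀)
    (hdr : dist x y₀ ≤ r / 16) (hpos : ∀ z ∈ closedBall x (dist x y₀), ε ≤ v z) :
    v x - ε ≤ (4 ^ (finrank ℝ E + 1) * (9 + 25 * C₀ + A) + 2 * A * r) / hopfConst (finrank ℝ E) *
      (dist x y₀ + ε) := by
  set d := dist x y₀
  set s := min ε d / 4 with hs_def
  have hε := h.pos
  have hs : 0 < s := div_pos (lt_min hε hd) (by norm_num)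
  have hsε : s ≤ ε / 4 := div_le_div_of_nonneg_right (min_le_left _ _) (by norm_num)
  have hsd : s ≤ d / 4 := div_le_div_of_nonneg_right (min_le_right _ _) (by norm_num)
  have hxp := mem_closedBall.1 hx
  have hA := h.nonneg (mem_closedBall.2 (by linarith : dist x p ≤ r))
  obtain ⟨z, hzy, hzx⟩ := exists_dist_eq_sub hs.le (by linarith : s ≤ dist x y₀) hd
  have hsub : closedBall y₀ (4 * s) ⊆ closedBall p (r / 4) :=
    closedBall_subset_closedBall' (by linarith [dist_triangle_left y₀ p x])
  have hsub' : closedBall x d ⊆ closedBall p r := closedBall_subset_closedBall' (by linarith)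
  have hlower : hopfConst (finrank ℝ E) * (v x - ε) * s / d ≤ v z - ε + 2 * A * d * s :=
    hopf (w := fun z => v z - ε) (h.contDiff.sub contDiff_const) hd
      (fun q hq => sub_nonneg.2 (hpos q hq))
      (fun q hq => by
        rw [laplacian_sub_const h.contDiff.contDiffAt]
        exact h.abs_laplacian_le q (hsub' hq) ((hpos q hq).trans (le_abs_self _)))
      hs.le hsd hzx
  have hz : z ∈ closedBall y₀ s := mem_closedBall.2 hzy.le
  have hz₄ : z ∈ closedBall y₀ (4 * s) := closedBall_subset_closedBall (by linarith) hz
  have hupper : v z - ε ≤ 4 ^ (finrank ℝ E + 1) * (2 * ε + (1 + 25 * C₀ + A) * s) :=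
    (h.mono (hsub.trans (closedBall_subset_closedBall (by linarith)))).sub_le_of_mul_le hC₀ hs
      (by linarith) hz hy₀ fun q hq => hpair z (hsub hz₄) q (hsub hq)
  have hgrowth := mul_le_of_le_min hε hd (by positivity : (0 : ℝ) ≤ 4 ^ (finrank ℝ E + 1))
    (by positivity : 0 ≤ 1 + 25 * C₀ + A) hA (by linarith : d ≤ r) hs_def
    (hlower.trans (add_le_add_left hupper _))
  rw [div_mul_eq_mul_div, le_div_iff₀' (hopfConst_pos _)]
  calc _ ≤ _ := hgrowth
    _ = _ := by ring

theorem le_growthConst_mul (h : HasTransitionLayer v A ε (closedBall p r)) (hC₀ : 0 ≤ C₀)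
    (hpair : ∀ x ∈ closedBall p (r / 4), ∀ y ∈ closedBall p (r / 4), ε ≤ v x → v y ≤ -ε →
      (v x - ε) * (-v y - ε) ≤ C₀ * ‖x - y‖ ^ 2)
    (hx : x ∈ closedBall p (r / 32)) (hy : y ∈ closedBall p (r / 32)) (hvy : v y ≤ ε) :
    v x ≤ growthConst (finrank ℝ E) A C₀ r * (dist x y + ε) := by
  have hε := h.pos
  have hxp := mem_closedBall.1 hx
  have hr : 0 ≤ r := by linarith [dist_nonneg.trans hxp]
  have hA := h.nonneg (mem_closedBall.2 (by linarith : dist x p ≤ r))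
  have hhopf := hopfConst_pos (finrank ℝ E)
  have hdist := dist_nonneg (x := x) (y := y)
  rw [growthConst, add_mul, one_mul]
  suffices v x - ε ≤ (4 ^ (finrank ℝ E + 1) * (9 + 25 * C₀ + A) + 2 * A * r) /
      hopfConst (finrank ℝ E) * (dist x y + ε) by linarith
  rcases le_or_gt (v x) ε with hvx | hvx
  · exact (sub_nonpos.2 hvx).trans (by positivity)
  obtain ⟨y₀, hy₀, hle, hpos⟩ := exists_nearest_le h.contDiff.continuous hvy hvx
  have hd : 0 < dist x y₀ := dist_pos.2 fun heq => hvx.not_ge (heq ▸ hy₀)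
  have hdr : dist x y₀ ≤ r / 16 := by linarith [dist_triangle_right x y p, mem_closedBall.1 hy]
  calc _ ≤ _ := h.sub_le_of_hopf hC₀ hpair hx hy₀ hd hdr hpos
    _ ≤ _ := by gcongr

end HasTransitionLayer

end TransitionLayer

section GradientBound

variable {E : Type*} [NormedAddCommGroup E] [InnerProductSpace ℝ E] [FiniteDimensional ℝ E]
  {v : E → ℝ} {A S C₁ ε r R : ℝ} {p x y y₀ z : E}

/-- At the scale `R` around `p` the function `v` is at most of the size of a linear function of
slope `M`, and so is its Laplacian after rescaling. -/
structure IsLinearScale (v : E → ℝ) (M R : ℝ) (p : E) : Prop where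
  pos : 0 < R
  abs_le : ∀ z ∈ closedBall p R, |v z| ≤ M * R
  abs_laplacian_le : ∀ z ∈ closedBall p R, |Δ v z| ≤ M / R

theorem IsLinearScale.norm_fderiv_le {M : ℝ} (h : IsLinearScale v M R p) (hv : ContDiff ℝ 2 v)
    (hM : 0 < M) : ‖fderiv ℝ v p‖ ≤ (2 * finrank ℝ E + 2) * M := by
  have hR := h.pos
  refine (TwoPhase.norm_fderiv_le hv hR (by positivity) h.abs_le h.abs_laplacian_le).trans_eq ?_
  field_simp

theorem IsLinearScale.mono {M M' : ℝ} (h : IsLinearScale v M R p) (hMM' : M ≤ M') :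
    IsLinearScale v M' R p := by
  have hR := h.pos
  exact ⟨hR, fun z hz => (h.abs_le z hz).trans (by gcongr),
    fun z hz => (h.abs_laplacian_le z hz).trans (by gcongr)⟩

namespace HasTransitionLayer

theorem isLinearScale_of_le_abs (h : HasTransitionLayer v A ε (closedBall p R)) (hR : 0 < R)
    {M : ℝ} (hM : A * R ≤ M) (hv : ∀ z ∈ closedBall p R, |v z| ≤ M * R)
    (hε : ∀ z ∈ closedBall p R, ε ≤ |v z|) : IsLinearScale v M R p where
  pos := hR
  abs_le := hv
  abs_laplacian_le z hz :=
    (h.abs_laplacian_le z hz (hε z hz)).trans ((le_div_iff₀ hR).2 hM)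

theorem isLinearScale_of_dist_le (h : HasTransitionLayer v A ε (closedBall p r)) (hr : 0 < r)
    (hε : ε ≤ 2) (hC₁ : 0 ≤ C₁) (hy₀ : dist y₀ p ≤ ε)
    (hgrowth : ∀ z ∈ closedBall p r, |v z| ≤ C₁ * (dist z y₀ + ε)) :
    IsLinearScale v (C₁ * (5 + 4 / r) + A) (min (ε / 2) r) p := by
  have hε₀ := h.pos
  have hA := h.nonneg (mem_closedBall_self hr.le)
  have hR : 0 < min (ε / 2) r := lt_min (by positivity) hr
  have hsub : closedBall p (min (ε / 2) r) ⊆ closedBall p r :=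
    closedBall_subset_closedBall (min_le_right _ _)
  have hεR : 2 * ε ≤ (4 + 4 / r) * min (ε / 2) r := by
    rcases le_total (ε / 2) r with hle | hle
    · rw [min_eq_left hle, add_mul]
      nlinarith [div_pos four_pos hr]
    · rw [min_eq_right hle, add_mul, div_mul_cancel₀ _ hr.ne']
      linarith
  refine ⟨hR, fun z hz => ?_, fun z hz => ?_⟩
  · have hdist : dist z y₀ + ε ≤ (5 + 4 / r) * min (ε / 2) r := by
      linarith [dist_triangle_right z y₀ p, mem_closedBall.1 hz]
    calc |v z| ≤ C₁ * (dist z y₀ + ε) := hgrowth z (hsub hz)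
      _ ≤ C₁ * ((5 + 4 / r) * min (ε / 2) r) := by gcongr
      _ ≤ (C₁ * (5 + 4 / r) + A) * min (ε / 2) r := by
        linarith [mul_nonneg hA hR.le]
  · calc |Δ v z| ≤ A / ε := h.abs_laplacian_le_div z (hsub hz)
      _ ≤ (C₁ * (5 + 4 / r) + A) / min (ε / 2) r := by
        gcongr
        · exact le_add_of_nonneg_left (by positivity)
        · exact (min_le_left _ _).trans (by linarith)

theorem exists_isLinearScale (h : HasTransitionLayer v A ε (closedBall p r)) (hr : 0 < r)
    (hε : ε ≤ 2) (hC₁ : 0 ≤ C₁) (hS : ∀ z ∈ closedBall p r, |v z| ≤ S)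
    (hgrowth : ∀ z ∈ closedBall p r, ∀ y ∈ closedBall p r, |v y| ≤ ε →
      |v z| ≤ C₁ * (dist z y + ε)) :
    ∃ R, IsLinearScale v (S / r + C₁ * (5 + 4 / r) + A * (1 + r)) R p := by
  have hp := mem_closedBall_self hr.le (x := p)
  have hA := h.nonneg hp
  have hS₀ : 0 ≤ S := (abs_nonneg _).trans (hS p hp)
  have hSr : 0 ≤ S / r := by positivity
  have hC₁r : 0 ≤ C₁ * (4 / r) := by positivity
  have hAr : 0 ≤ A * r := by positivity
  by_cases hlayer : ∀ z ∈ closedBall p r, ε ≤ |v z|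
  · refine ⟨r, h.isLinearScale_of_le_abs hr (by linarith) (fun z hz => ?_) hlayer⟩
    calc |v z| ≤ S / r * r := by rw [div_mul_cancel₀ _ hr.ne']; exact hS z hz
      _ ≤ _ := by
        gcongr
        linarith
  push Not at hlayer
  obtain ⟨y, hy, hvy⟩ := hlayer
  have hnear : ∀ y₀ ∈ closedBall p r, |v y₀| ≤ ε → dist y₀ p ≤ ε →
      ∃ R, IsLinearScale v (S / r + C₁ * (5 + 4 / r) + A * (1 + r)) R p := fun y₀ hy₀ hvy₀ hdist =>
    ⟨_, (h.isLinearScale_of_dist_le hr hε hC₁ hdist fun z hz => hgrowth z hz y₀ hy₀ hvy₀).mono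
      (by linarith)⟩
  rcases le_or_gt |v p| ε with hvp | hvp
  · exact hnear p hp hvp ((dist_self p).trans_le h.pos.le)
  obtain ⟨y₀, hvy₀, hle, hpos⟩ := exists_nearest_le h.contDiff.continuous.abs hvy.le hvp
  have hdr : dist p y₀ ≤ r := hle.trans (mem_closedBall'.1 hy)
  rcases le_or_gt (dist p y₀) ε with hd | hd
  · exact hnear y₀ (mem_closedBall'.2 hdr) hvy₀ (dist_comm p y₀ ▸ hd)
  have hd₀ : 0 < dist p y₀ := h.pos.trans hd
  have hsub : closedBall p (dist p y₀) ⊆ closedBall p r := closedBall_subset_closedBall hdr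
  refine ⟨_, (h.mono hsub).isLinearScale_of_le_abs hd₀ ?_ (fun z hz => ?_) hpos⟩
  · linarith [mul_le_mul_of_nonneg_left hdr hA]
  · calc |v z| ≤ C₁ * (dist z y₀ + ε) := hgrowth z (hsub hz) y₀ (mem_closedBall'.2 hdr) hvy₀
      _ ≤ C₁ * (3 * dist p y₀) := by
        gcongr
        linarith [dist_triangle z p y₀, mem_closedBall.1 hz]
      _ = 3 * C₁ * dist p y₀ := by ring
      _ ≤ _ := by
        gcongr
        linarith

theorem sub_mul_neg_sub_le (h : HasTransitionLayer v A ε (closedBall p r)) (hr : 0 < r)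
    (hS : 0 < S) (hvS : ∀ z ∈ closedBall p r, |v z| ≤ S) (hx : x ∈ closedBall p (r / 4))
    (hy : y ∈ closedBall p (r / 4)) (hvx : ε ≤ v x) (hvy : v y ≤ -ε) :
    (v x - ε) * (-v y - ε) ≤
      32 * ((finrank ℝ E + 5) * S ^ 2 + A * S * (r / 2) ^ 2) / (r / 2) ^ 2 * ‖x - y‖ ^ 2 := by
  have hA := h.nonneg (mem_closedBall_self hr.le)
  have hr₂ : 2 * (r / 2) = r := by ring
  have hr₄ : r / 2 / 2 = r / 4 := by ring
  have hpair : IsTwoPhasePair (fun z => v z - ε) (fun z => -v z - ε) A S (r / 2) p :=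
    isTwoPhasePair (by rwa [hr₂]) (by rwa [hr₂])
  exact hpair.mul_le hS (by positivity) hA (by rwa [hr₄]) (by rwa [hr₄]) (sub_nonneg.2 hvx)
    (by linarith)

theorem exists_norm_fderiv_le (E : Type*) [NormedAddCommGroup E] [InnerProductSpace ℝ E]
    [FiniteDimensional ℝ E] [MeasurableSpace E] [BorelSpace E] (hA : 0 < A) (hS : 0 < S)
    (hr : 0 < r) :
    ∃ C > 0, ∀ (v : E → ℝ) (p : E) (ε : ℝ), ε ≤ 2 → HasTransitionLayer v A ε (closedBall p r) →
      (∀ z ∈ closedBall p r, |v z| ≤ S) → ‖fderiv ℝ v p‖ ≤ C := by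
  set C₀ := 32 * ((finrank ℝ E + 5) * S ^ 2 + A * S * (r / 2) ^ 2) / (r / 2) ^ 2
  set C₁ := growthConst (finrank ℝ E) A C₀ r
  have hC₀ : 0 ≤ C₀ := by positivity
  have hC₁ : 0 ≤ C₁ := by
    have := hopfConst_pos (finrank ℝ E)
    simp only [C₁, growthConst]
    positivity
  set M := S / (r / 32) + C₁ * (5 + 4 / (r / 32)) + A * (1 + r / 32)
  have hM : 0 < M := by positivity
  refine ⟨(2 * finrank ℝ E + 2) * M, by positivity, fun v p ε hε h hvS => ?_⟩
  have hsub : closedBall p (r / 32) ⊆ closedBall p r := closedBall_subset_closedBall (by linarith)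
  have hpair {v : E → ℝ} (h : HasTransitionLayer v A ε (closedBall p r))
      (hvS : ∀ z ∈ closedBall p r, |v z| ≤ S) (x) (hx : x ∈ closedBall p (r / 4)) (y)
      (hy : y ∈ closedBall p (r / 4)) (hvx : ε ≤ v x) (hvy : v y ≤ -ε) :=
    h.sub_mul_neg_sub_le hr hS hvS hx hy hvx hvy
  have hneg : ∀ z ∈ closedBall p r, |-v z| ≤ S := by simpa only [abs_neg] using hvS
  obtain ⟨R, hscale⟩ := (h.mono hsub).exists_isLinearScale (by positivity) hε hC₁
    (fun z hz => hvS z (hsub hz)) fun z hz y hy hvy => by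
      have hupper := h.le_growthConst_mul hC₀ (hpair h hvS) hz hy (abs_le.1 hvy).2
      have hlower := h.neg.le_growthConst_mul hC₀ (hpair h.neg hneg) hz hy
        (by linarith [(abs_le.1 hvy).1])
      exact abs_le.2 ⟨by linarith, hupper⟩
  exact hscale.norm_fderiv_le h.contDiff hM

end HasTransitionLayer

end GradientBound

section LocalBoundedness

variable {E : Type*} [NormedAddCommGroup E] [InnerProductSpace ℝ E] [FiniteDimensional ℝ E]
  {v : E → ℝ} {A ε R : ℝ} {p : E}

theorem one_le_sqrt_one_add_sq (t : ℝ) : 1 ≤ √(1 + t ^ 2) :=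
  Real.one_le_sqrt.2 (le_add_of_nonneg_right (sq_nonneg t))

theorem abs_le_sqrt_one_add_sq (t : ℝ) : |t| ≤ √(1 + t ^ 2) := Real.abs_le_sqrt (by linarith)

theorem hasTwoJetAt_sqrt_one_add_sq (t : ℝ) :
    HasTwoJetAt (fun t => √(1 + t ^ 2)) (t / √(1 + t ^ 2)) (√(1 + t ^ 2) ^ 3)⁻¹ t := by
  have hpos (s : ℝ) : 0 < √(1 + s ^ 2) := Real.sqrt_pos.2 (by positivity)
  have hderiv (s : ℝ) : HasDerivAt (fun s => √(1 + s ^ 2)) (s / √(1 + s ^ 2)) s := by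
    have hsq : HasDerivAt (fun s : ℝ => 1 + s ^ 2) (2 * s) s := by
      simpa using (hasDerivAt_pow 2 s).const_add 1
    refine (hsq.sqrt (by positivity)).congr_deriv ?_
    have := (hpos s).ne'
    field_simp
  refine ⟨fun s => s / √(1 + s ^ 2), .of_forall hderiv, rfl,
    ((hasDerivAt_id' t).div (hderiv t) (hpos t).ne').congr_deriv ?_⟩
  have hsq : √(1 + t ^ 2) ^ 2 = 1 + t ^ 2 := Real.sq_sqrt (by positivity)
  have := (hpos t).ne'
  field_simp
  linarith

theorem contDiff_sqrt_one_add_sq {n : WithTop ℕ∞} : ContDiff ℝ n fun t : ℝ => √(1 + t ^ 2) :=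
  (contDiff_const.add (contDiff_id.pow 2)).sqrt fun t => by positivity

theorem div_sqrt_mul_laplacian_le (hv : ContDiff ℝ 2 v) (x : E) :
    v x / √(1 + v x ^ 2) * Δ v x ≤ Δ (fun z => √(1 + v z ^ 2)) x := by
  rw [laplacian_comp contDiff_sqrt_one_add_sq.contDiffAt (hasTwoJetAt_sqrt_one_add_sq _)
    hv.contDiffAt]
  exact le_add_of_nonneg_left (by positivity)

-- In the layer the factor `v / √(1 + v²)` is at most `ε`, which absorbs the `1 / ε`.
theorem HasTransitionLayer.neg_le_laplacian_sqrt {s : Set E} (h : HasTransitionLayer v A ε s)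
    {z : E} (hz : z ∈ s) : -A ≤ Δ (fun z => √(1 + v z ^ 2)) z := by
  refine le_trans ?_ (div_sqrt_mul_laplacian_le h.contDiff z)
  have hone := one_le_sqrt_one_add_sq (v z)
  refine (abs_le.1 ?_).1
  rw [abs_mul, abs_div, abs_of_nonneg (zero_le_one.trans hone)]
  rcases le_or_gt ε |v z| with hlarge | hsmall
  · calc |v z| / √(1 + v z ^ 2) * |Δ v z| ≤ 1 * A := by
          gcongr
          · exact div_le_one_of_le₀ (abs_le_sqrt_one_add_sq _) (zero_le_one.trans hone)
          · exact h.abs_laplacian_le z hz hlarge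
      _ = A := one_mul A
  · have hε := h.pos
    calc |v z| / √(1 + v z ^ 2) * |Δ v z| ≤ ε * (A / ε) := by
          gcongr
          · exact (div_le_self (abs_nonneg _) hone).trans hsmall.le
          · exact h.abs_laplacian_le_div z hz
      _ = A := by field_simp

variable [MeasurableSpace E] [BorelSpace E]

theorem integral_comp_add_smul_mul_cap_le {f : E → ℝ} (hf : Continuous f) (hf₀ : ∀ z, 0 ≤ f z)
    (p : E) (hR : 0 < R) :
    ∫ z, f (p + R • z) * cap z ≤ (R ^ finrank ℝ E)⁻¹ * ∫ y in closedBall p R, f y := by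
  rw [integral_comp_add_smul_mul_cap f p hR]
  gcongr
  rw [← setIntegral_eq_integral_of_forall_compl_eq_zero (s := closedBall p R) fun y hy => by
    rw [cap_inv_smul_sub_eq_zero hR (not_le.1 hy).le, mul_zero]]
  exact integral_mono (integrable_mul_cap_inv_smul_sub hf p hR).integrableOn
    (hf.continuousOn.integrableOn_compact (isCompact_closedBall p R))
    fun y => mul_le_of_le_one_right (hf₀ y) (cap_le_one _)

theorem HasTransitionLayer.abs_le (h : HasTransitionLayer v A ε (closedBall p R)) (hR : 0 < R) :
    |v p| ≤ 1 + (R ^ finrank ℝ E)⁻¹ * (∫ y in closedBall p R, v y ^ 2) / (∫ z : E, cap z)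
      + A * R ^ 2 / 8 := by
  set I := ∫ z : E, cap z
  have hI : 0 < I := integral_cap_pos
  have hv : Continuous v := h.contDiff.continuous
  have hv_comp : Continuous fun z => v (p + R • z) := hv.comp (by fun_prop)
  have hmean := mul_integral_cap_le_of_le_laplacian (contDiff_sqrt_one_add_sq.comp h.contDiff)
    hR.le (h.nonneg (mem_closedBall_self hR.le)) fun z hz => h.neg_le_laplacian_sqrt hz
  have hsq : ∫ z, √(1 + v (p + R • z) ^ 2) * cap z ≤
      I + ∫ z, v (p + R • z) ^ 2 * cap z := by
    have hsplit : ∫ z, (1 + v (p + R • z) ^ 2) * cap z = I + ∫ z, v (p + R • z) ^ 2 * cap z := by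
      simp only [add_mul, one_mul]
      exact integral_add (by simpa using integrable_mul_cap (E := E) (continuous_const (y := 1)))
        (integrable_mul_cap (hv_comp.pow 2))
    rw [← hsplit]
    refine integral_mono (integrable_mul_cap (by fun_prop)) (integrable_mul_cap (by fun_prop))
      fun z => mul_le_mul_of_nonneg_right ?_ (cap_nonneg z)
    exact Real.sqrt_le_self_iff.2 (Or.inr (le_add_of_nonneg_right (sq_nonneg _)))
  have hscale := integral_comp_add_smul_mul_cap_le (hv.pow 2) (fun z => sq_nonneg (v z)) p hR
  rw [← mul_le_mul_iff_left₀ hI]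
  calc |v p| * I ≤ √(1 + v p ^ 2) * I := by
        gcongr
        exact abs_le_sqrt_one_add_sq _
    _ ≤ I + (R ^ finrank ℝ E)⁻¹ * (∫ y in closedBall p R, v y ^ 2) + A * R ^ 2 / 8 * I :=
      hmean.trans (by gcongr; exact hsq.trans (by gcongr; exact hscale))
    _ = _ := by field_simp

end LocalBoundedness

section Mollification

open Convolution ContinuousLinearMap ContDiff

variable {E : Type*} [NormedAddCommGroup E] [InnerProductSpace ℝ E] [FiniteDimensional ℝ E]

theorem laplacian_eq_zero_of_notMem_tsupport {φ : E → ℝ} {x : E} (hx : x ∉ tsupport φ) :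
    Δ φ x = 0 := by
  rw [(laplacian_congr_nhds (notMem_tsupport_iff_eventuallyEq.1 hx)).eq_of_nhds]
  simp [laplacian_eq_sum_fderiv_fderiv _ (stdOrthonormalBasis ℝ E)]

variable [MeasurableSpace E] [BorelSpace E] {φ g g' h h' : E → ℝ} {Ω : Set E} {x : E}

theorem fderiv_convolution_left_apply (hφ : ContDiff ℝ 1 φ) (hφc : HasCompactSupport φ)
    (hg : LocallyIntegrable g) (x e : E) :
    fderiv ℝ (φ ⋆[lsmul ℝ ℝ, volume] g) x e =
      ((fun y => fderiv ℝ φ y e) ⋆[lsmul ℝ ℝ, volume] g) x := by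
  have hexists := (hφc.fderiv (𝕜 := ℝ)).convolutionExists_left
    ((lsmul ℝ ℝ : ℝ →L[ℝ] ℝ →L[ℝ] ℝ).precompL E) (hφ.continuous_fderiv one_ne_zero) hg x
  rw [(hφc.hasFDerivAt_convolution_left (lsmul ℝ ℝ) hφ hg x).fderiv]
  simp_rw [convolution_def, integral_apply hexists]
  rfl

theorem laplacian_convolution_left (hφ : ContDiff ℝ 2 φ) (hφc : HasCompactSupport φ)
    (hg : LocallyIntegrable g) (x : E) :
    Δ (φ ⋆[lsmul ℝ ℝ, volume] g) x = ∫ t, g (x - t) * Δ φ t := by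
  let b := stdOrthonormalBasis ℝ E
  have hconv : ContDiff ℝ 2 (φ ⋆[lsmul ℝ ℝ, volume] g) :=
    hφc.contDiff_convolution_left _ (n := 2) hφ hg
  have hcompact (e : E) : HasCompactSupport fun y => fderiv ℝ φ y e := hφc.fderiv_apply ℝ e
  have hsmooth (e : E) : ContDiff ℝ 1 fun y => fderiv ℝ φ y e :=
    (hφ.fderiv_right (by norm_num)).clm_apply contDiff_const
  have hswap {f : E → ℝ} (hf : ContDiff ℝ 2 f) (y e : E) :
      fderiv ℝ (fderiv ℝ f) y e e = fderiv ℝ (fun z => fderiv ℝ f z e) y e := by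
    have hdiff : DifferentiableAt ℝ (fderiv ℝ f) y :=
      (hf.fderiv_right (m := 1) (by norm_num)).differentiable one_ne_zero y
    simp [fderiv_clm_apply hdiff (differentiableAt_const e)]
  have hsecond (e : E) : fderiv ℝ (fderiv ℝ (φ ⋆[lsmul ℝ ℝ, volume] g)) x e e =
      ∫ t, g (x - t) * fderiv ℝ (fderiv ℝ φ) t e e := by
    simp_rw [hswap hconv, hswap hφ, mul_comm (g _),
      fderiv_convolution_left_apply (hφ.of_le one_le_two) hφc hg]
    exact fderiv_convolution_left_apply (hsmooth e) (hcompact e) hg x e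
  have hint (e : E) : Integrable fun t => g (x - t) * fderiv ℝ (fderiv ℝ φ) t e e := by
    simp_rw [hswap hφ, mul_comm (g _)]
    exact ((hcompact e).fderiv_apply ℝ e).convolutionExists_left (lsmul ℝ ℝ)
      (((hsmooth e).continuous_fderiv one_ne_zero).clm_apply continuous_const) hg x
  simp only [laplacian_eq_sum_fderiv_fderiv _ b, hsecond, Finset.mul_sum]
  exact (integral_finsetSum _ fun i _ => hint (b i)).symm

/-- The inequalities `-h ≤ Δ g ≤ h` on `Ω` in the sense of distributions. -/
def AbsDistribLaplacianLE (Ω : Set E) (g h : E → ℝ) : Prop :=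
  ∀ φ : E → ℝ, ContDiff ℝ ∞ φ → HasCompactSupport φ → tsupport φ ⊆ Ω → (∀ x, 0 ≤ φ x) →
    |∫ x in Ω, g x * Δ φ x| ≤ ∫ x in Ω, h x * φ x

namespace AbsDistribLaplacianLE

theorem congr (hgh : AbsDistribLaplacianLE Ω g h) (hΩ : MeasurableSet Ω) (hg : EqOn g g' Ω)
    (hh : EqOn h h' Ω) : AbsDistribLaplacianLE Ω g' h' := fun φ hφ hφc hφΩ hφ₀ => by
  rw [← setIntegral_congr_fun hΩ fun x hx => congrArg (· * Δ φ x) (hg hx),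
    ← setIntegral_congr_fun hΩ fun x hx => congrArg (· * φ x) (hh hx)]
  exact hgh φ hφ hφc hφΩ hφ₀

theorem abs_laplacian_convolution_le (hgh : AbsDistribLaplacianLE Ω g h) (hφ : ContDiff ℝ ∞ φ)
    (hφc : HasCompactSupport φ) (hφ₀ : ∀ y, 0 ≤ φ y) (hg : LocallyIntegrable g)
    (hx : tsupport (fun y => φ (x - y)) ⊆ Ω) :
    |Δ (φ ⋆[lsmul ℝ ℝ, volume] g) x| ≤ ∫ y in Ω, h y * φ (x - y) := by
  have hφ₂ : ContDiff ℝ 2 φ := hφ.of_le (by norm_cast)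
  have htest := hgh (fun y => φ (x - y)) (hφ.comp (contDiff_const.sub contDiff_id))
    (hφc.comp_homeomorph (.subLeft x)) hx fun y => hφ₀ _
  have hΔ (y : E) : Δ (fun y => φ (x - y)) y = Δ φ (x - y) := by
    simpa [sub_eq_add_neg] using laplacian_comp_add_isometry hφ₂ (LinearIsometryEquiv.neg ℝ) x y
  rwa [setIntegral_eq_integral_of_forall_compl_eq_zero fun y hy => by
      rw [laplacian_eq_zero_of_notMem_tsupport fun hmem => hy (hx hmem), mul_zero],
    funext fun y => congrArg (g y * ·) (hΔ y),
    ← integral_sub_left_eq_self (fun y => g y * Δ φ (x - y)) volume x,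
    funext fun t => congrArg (fun s => g (x - t) * Δ φ s) (sub_sub_cancel x t),
    ← laplacian_convolution_left hφ₂ hφc hg x] at htest

theorem abs_laplacian_normed_convolution_le (hgh : AbsDistribLaplacianLE Ω g h)
    (hg : LocallyIntegrable g) (f : ContDiffBump (0 : E)) {c : ℝ}
    (hx : closedBall x f.rOut ⊆ Ω) (hh : ∀ y ∈ closedBall x f.rOut, h y ∈ Icc 0 c) :
    |Δ (f.normed volume ⋆[lsmul ℝ ℝ, volume] g) x| ≤ c := by
  set ψ : E → ℝ := fun y => f.normed volume (x - y)
  have hψ_support : tsupport ψ ⊆ closedBall x f.rOut := by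
    refine closure_minimal (fun y hy => ?_) isClosed_closedBall
    have hmem : x - y ∈ tsupport (f.normed volume) := subset_tsupport _ hy
    rw [f.tsupport_normed_eq, mem_closedBall_zero_iff, ← dist_eq_norm] at hmem
    exact mem_closedBall'.2 hmem
  have hψ_zero (y : E) (hy : y ∉ closedBall x f.rOut) : ψ y = 0 :=
    image_eq_zero_of_notMem_tsupport fun hmem => hy (hψ_support hmem)
  have hψ₀ (y : E) : 0 ≤ ψ y := f.nonneg_normed _
  have hψ_int : Integrable ψ := f.integrable_normed.comp_sub_left x
  have hψ_one : ∫ y in Ω, ψ y = 1 := by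
    rw [setIntegral_eq_integral_of_forall_compl_eq_zero fun y hy =>
      hψ_zero y fun hmem => hy (hx hmem)]
    exact (integral_sub_left_eq_self _ volume x).trans f.integral_normed
  calc |Δ (f.normed volume ⋆[lsmul ℝ ℝ, volume] g) x| ≤ ∫ y in Ω, h y * ψ y :=
        hgh.abs_laplacian_convolution_le f.contDiff_normed f.hasCompactSupport_normed
          f.nonneg_normed hg (hψ_support.trans hx)
    _ ≤ ∫ y in Ω, c * ψ y := by
        refine integral_mono_of_nonneg (.of_forall fun y => ?_)
          (hψ_int.const_mul c).integrableOn (.of_forall fun y => ?_) <;>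
          by_cases hy : y ∈ closedBall x f.rOut
        · exact mul_nonneg (hh y hy).1 (hψ₀ y)
        · simp [hψ_zero y hy]
        · exact mul_le_mul_of_nonneg_right (hh y hy).2 (hψ₀ y)
        · simp [hψ_zero y hy]
    _ = c := by rw [integral_const_mul, hψ_one, mul_one]

end AbsDistribLaplacianLE

/-- The right-hand side `A (χ_{|s - 1| < ε} / ε + 1)` of the two-phase inequalities, as a function
of the value `s` of the solution. -/
noncomputable def layerBound (A ε : ℝ) (s : ℝ) : ℝ :=
  A * (1 / ε * indicator {t | |t - 1| < ε} (fun _ => (1 : ℝ)) s + 1)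

theorem layerBound_mem_Icc {A ε : ℝ} (hA : 0 ≤ A) (hε : 0 < ε) (s : ℝ) :
    layerBound A ε s ∈ Icc 0 (A * (1 / ε + 1)) := by
  have hnonneg : 0 ≤ indicator {t | |t - 1| < ε} (fun _ => (1 : ℝ)) s :=
    indicator_nonneg (fun _ _ => zero_le_one) s
  have hle : indicator {t | |t - 1| < ε} (fun _ => (1 : ℝ)) s ≤ 1 :=
    indicator_le_self' (fun _ _ => zero_le_one) s
  refine ⟨by unfold layerBound; positivity, ?_⟩
  unfold layerBound
  gcongr
  exact mul_le_of_le_one_right (by positivity) hle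

theorem layerBound_eq {A ε s : ℝ} (hs : ε ≤ |s - 1|) : layerBound A ε s = A := by
  simp [layerBound, hs]

theorem AbsDistribLaplacianLE.hasTransitionLayer_convolution {A ε r ρ : ℝ} {c : E}
    (hΔ : AbsDistribLaplacianLE (ball c ρ) g fun x => layerBound A ε (g x)) (hg : Continuous g)
    (hA : 0 ≤ A) (hε : ε ∈ Ioc 0 1) (f : ContDiffBump (0 : E)) (hf : r + f.rOut < ρ)
    (hosc : ∀ x, ∀ y ∈ closedBall x f.rOut, |g y - g x| ≤ ε / 2) :
    HasTransitionLayer (fun x => (f.normed volume ⋆[lsmul ℝ ℝ, volume] g) x - 1) (4 * A) (2 * ε)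
      (closedBall c r) := by
  have hε₀ := hε.1
  set w := f.normed volume ⋆[lsmul ℝ ℝ, volume] g
  have hw (x : E) : |w x - g x| ≤ ε / 2 :=
    f.dist_normed_convolution_le hg.aestronglyMeasurable fun y hy =>
      hosc x y (ball_subset_closedBall hy)
  have hw₂ : ContDiff ℝ 2 w :=
    f.hasCompactSupport_normed.contDiff_convolution_left _ (n := 2) f.contDiff_normed
      hg.locallyIntegrable
  have hΔw {x : E} (hx : x ∈ closedBall c r) {M : ℝ}
      (hM : ∀ y ∈ closedBall x f.rOut, layerBound A ε (g y) ∈ Icc 0 M) :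
      |Δ (fun x => w x - 1) x| ≤ M := by
    rw [laplacian_sub_const hw₂.contDiffAt]
    refine hΔ.abs_laplacian_normed_convolution_le hg.locallyIntegrable f
      (closedBall_subset_ball' ?_) hM
    linarith [mem_closedBall.1 hx]
  refine ⟨hw₂.sub contDiff_const, by positivity, fun x hx => ?_, fun x hx hlarge => ?_⟩
  · refine (hΔw hx fun y _ => layerBound_mem_Icc hA hε₀ _).trans ?_
    rw [le_div_iff₀ (by positivity)]
    calc A * (1 / ε + 1) * (2 * ε) = 2 * A * (1 + ε) := by field_simp
      _ ≤ 2 * A * (1 + 1) := by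
        gcongr
        exact hε.2
      _ = 4 * A := by ring
  · refine (hΔw hx fun y hy => ?_).trans (by linarith : A ≤ 4 * A)
    have hfar : ε ≤ |g y - 1| := by
      have hgy := hosc x y hy
      rw [abs_sub_comm] at hgy
      linarith [hw x, abs_sub_le (w x) (g x) 1, abs_sub_le (g x) (g y) 1]
    rw [layerBound_eq hfar]
    exact ⟨hA, le_rfl⟩

theorem AbsDistribLaplacianLE.exists_hasTransitionLayer {A ε η r ρ : ℝ} {c : E} {L : NNReal}
    (hΔ : AbsDistribLaplacianLE (ball c ρ) g fun x => layerBound A ε (g x))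
    (hg : LipschitzWith L g) (hA : 0 ≤ A) (hε : ε ∈ Ioc 0 1) (hη : 0 < η) (hr : r < ρ) :
    ∃ w : E → ℝ, (∀ x, |w x - g x| ≤ η) ∧
      HasTransitionLayer (fun x => w x - 1) (4 * A) (2 * ε) (closedBall c r) := by
  obtain ⟨δ₀, hδ₀, hLδ₀⟩ := exists_pos_mul_lt (lt_min hη (half_pos hε.1)) (L : ℝ)
  obtain ⟨δ, hδ, hδ_lt⟩ := exists_between (lt_min hδ₀ (sub_pos.2 hr))
  obtain ⟨hδδ₀, hδr⟩ := lt_min_iff.1 hδ_lt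
  have hosc (x y : E) (hxy : y ∈ closedBall x δ) : |g y - g x| ≤ min η (ε / 2) :=
    calc |g y - g x| ≤ L * dist y x := hg.dist_le_mul y x
      _ ≤ L * δ₀ := by
        gcongr
        exact (mem_closedBall.1 hxy).trans hδδ₀.le
      _ ≤ min η (ε / 2) := hLδ₀.le
  let f : ContDiffBump (0 : E) := ⟨δ / 2, δ, half_pos hδ, half_lt_self hδ⟩
  refine ⟨f.normed volume ⋆[lsmul ℝ ℝ, volume] g, fun x => ?_,
    hΔ.hasTransitionLayer_convolution hg.continuous hA hε f (lt_sub_iff_add_lt'.1 hδr)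
      fun x y hy => (hosc x y hy).trans (min_le_right _ _)⟩
  exact f.dist_normed_convolution_le hg.continuous.aestronglyMeasurable fun y hy =>
    (hosc x y (ball_subset_closedBall hy)).trans (min_le_left _ _)

end Mollification

section Limit

variable {E : Type*} [NormedAddCommGroup E]

theorem lipschitzOnWith_of_forall_exists_approx [NormedSpace ℝ E] {s : Set E} (hs : Convex ℝ s)
    {g : E → ℝ} {C : NNReal} (h : ∀ η > 0, ∃ w : E → ℝ, Differentiable ℝ w ∧
      (∀ x, |w x - g x| ≤ η) ∧ ∀ x ∈ s, ‖fderiv ℝ w x‖ ≤ C) :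
    LipschitzOnWith C g s := by
  refine LipschitzOnWith.of_dist_le_mul fun x hx y hy => le_of_forall_pos_le_add fun η hη => ?_
  obtain ⟨w, hw, hwg, hwC⟩ := h (η / 2) (half_pos hη)
  have hlip : |w x - w y| ≤ C * dist x y := by
    simpa [dist_eq_norm] using
      hs.norm_image_sub_le_of_norm_fderiv_le (fun z _ => hw z) hwC hy hx
  have hx' := hwg x
  rw [abs_sub_comm] at hx'
  calc |g x - g y| ≤ |g x - w x| + |w x - w y| + |w y - g y| := by
        simpa using abs_add_three (g x - w x) (w x - w y) (w y - g y)
    _ ≤ η / 2 + C * dist x y + η / 2 := by gcongr; exact hwg y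
    _ = C * dist x y + η := by ring

variable [InnerProductSpace ℝ E] [FiniteDimensional ℝ E] [MeasurableSpace E] [BorelSpace E]
  {A K r ρ : ℝ}

variable (E) in
theorem HasTransitionLayer.exists_norm_fderiv_le_of_setIntegral_sq_le (hA : 0 < A) (hK : 0 ≤ K)
    (hr : r < ρ) : ∃ C > 0, ∀ (v : E → ℝ) (c : E) (ε : ℝ), ε ≤ 2 →
      HasTransitionLayer v A ε (closedBall c ρ) → ∫ x in closedBall c ρ, v x ^ 2 ≤ K →
      ∀ p ∈ ball c r, ‖fderiv ℝ v p‖ ≤ C := by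
  set R := (ρ - r) / 2
  have hRρ : 2 * R = ρ - r := mul_div_cancel₀ _ two_ne_zero
  have hR : 0 < R := by linarith
  have hcap : 0 < ∫ z : E, cap z := integral_cap_pos
  set S := 1 + (R ^ finrank ℝ E)⁻¹ * K / (∫ z : E, cap z) + A * R ^ 2 / 8
  obtain ⟨C, hC, hgrad⟩ := exists_norm_fderiv_le E hA (show 0 < S by positivity) hR
  refine ⟨C, hC, fun v c ε hε h hvK p hp => ?_⟩
  have hpR : closedBall p R ⊆ closedBall c ρ :=
    closedBall_subset_closedBall' (by linarith [mem_ball.1 hp])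
  refine hgrad v p ε hε (h.mono hpR) fun z hz => ?_
  have hzR : closedBall z R ⊆ closedBall c ρ := by
    refine closedBall_subset_closedBall' ?_
    linarith [dist_triangle z p c, mem_closedBall.1 hz, mem_ball.1 hp]
  refine ((h.mono hzR).abs_le hR).trans ?_
  have hmono : ∫ y in closedBall z R, v y ^ 2 ≤ K :=
    (setIntegral_mono_set ((h.contDiff.continuous.pow 2).continuousOn.integrableOn_compact
      (isCompact_closedBall c ρ)) (.of_forall fun y => sq_nonneg (v y)) hzR.eventuallyLE).trans hvK
  simp only [S]
  gcongr

theorem setIntegral_sub_one_sq_le {w g : E → ℝ} (hw : Continuous w) (hg : Continuous g)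
    (hwg : ∀ x, |w x - g x| ≤ 1) (hr : r < ρ) (c : E) :
    ∫ x in closedBall c r, (w x - 1) ^ 2 ≤
      2 * (∫ x in ball c ρ, g x ^ 2) + 8 * volume.real (ball c ρ) := by
  have hint {f : E → ℝ} (hf : Continuous f) : IntegrableOn f (ball c ρ) :=
    (hf.continuousOn.integrableOn_compact (isCompact_closedBall c ρ)).mono_set
      ball_subset_closedBall
  calc ∫ x in closedBall c r, (w x - 1) ^ 2 ≤ ∫ x in ball c ρ, (w x - 1) ^ 2 :=
        setIntegral_mono_set (hint (by fun_prop)) (.of_forall fun x => sq_nonneg (w x - 1))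
          (closedBall_subset_ball hr).eventuallyLE
    _ ≤ ∫ x in ball c ρ, (2 * g x ^ 2 + 8) := by
        refine integral_mono (hint (by fun_prop)) (hint (by fun_prop)) fun x => ?_
        have := abs_le.1 (hwg x)
        have hsq : (w x - g x - 1) ^ 2 ≤ 4 := by nlinarith
        linarith [sq_nonneg (g x - (w x - g x - 1))]
    _ = 2 * (∫ x in ball c ρ, g x ^ 2) + 8 * volume.real (ball c ρ) := by
        rw [integral_add (hint (by fun_prop)) (hint continuous_const), integral_const_mul]
        simp [mul_comm]

variable (E) in
theorem exists_lipschitzOnWith_of_absDistribLaplacianLE (hA : 0 < A) (hK : 0 ≤ K) (hr : r < ρ) :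
    ∃ C : NNReal, 0 < C ∧ ∀ ε ∈ Ioc (0 : ℝ) 1, ∀ (g : E → ℝ) (c : E) (L : NNReal),
      LipschitzWith L g → ∫ x in ball c ρ, g x ^ 2 ≤ K →
      AbsDistribLaplacianLE (ball c ρ) g (fun x => layerBound A ε (g x)) →
      LipschitzOnWith C g (ball c r) := by
  obtain ⟨r', hrr', hr'ρ⟩ := exists_between hr
  obtain ⟨C, hC, hgrad⟩ := HasTransitionLayer.exists_norm_fderiv_le_of_setIntegral_sq_le E
    (show 0 < 4 * A by positivity)
    (show 0 ≤ 2 * K + 8 * volume.real (ball (0 : E) ρ) by positivity) hrr'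
  refine ⟨⟨C, hC.le⟩, hC, fun ε hε g c L hg hgK hΔ =>
    lipschitzOnWith_of_forall_exists_approx (convex_ball c r) fun η hη => ?_⟩
  obtain ⟨w, hwg, hlayer⟩ := hΔ.exists_hasTransitionLayer hg hA.le hε (lt_min hη one_pos) hr'ρ
  have hw : ContDiff ℝ 2 w := by simpa using hlayer.contDiff.add (contDiff_const (c := (1 : ℝ)))
  have hwK : ∫ x in closedBall c r', (w x - 1) ^ 2 ≤
      2 * K + 8 * volume.real (ball (0 : E) ρ) := by
    refine (setIntegral_sub_one_sq_le hw.continuous hg.continuous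
      (fun x => (hwg x).trans (min_le_right _ _)) hr'ρ c).trans ?_
    rw [Measure.addHaar_real_ball_center volume c]
    gcongr
  refine ⟨w, hw.differentiable two_ne_zero, fun x => (hwg x).trans (min_le_left _ _),
    fun x hx => ?_⟩
  have hgrad_x := hgrad _ c (2 * ε) (by linarith [hε.2]) hlayer hwK x hx
  rwa [fderiv_sub_const] at hgrad_x

end Limit

theorem lap_eq_laplacian {N : ℕ} {f : EuclideanSpace ℝ (Fin N) → ℝ} (hf : ContDiff ℝ 2 f)
    (x : EuclideanSpace ℝ (Fin N)) : lap f x = Δ f x := by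
  have hdiff : DifferentiableAt ℝ (fderiv ℝ f) x :=
    (hf.fderiv_right (m := 1) (by norm_num)).differentiable one_ne_zero x
  simp [laplacian_eq_sum_fderiv_fderiv f (EuclideanSpace.basisFun (Fin N) ℝ), lap,
    fderiv_clm_apply hdiff (differentiableAt_const _)]

theorem absDistribLaplacianLE_of_lap {N : ℕ} {A ε : ℝ} {u : EuclideanSpace ℝ (Fin N) → ℝ}
    {Ω : Set (EuclideanSpace ℝ (Fin N))}
    (h : ∀ φ : EuclideanSpace ℝ (Fin N) → ℝ, ContDiff ℝ (⊤ : ℕ∞) φ → HasCompactSupport φ →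
      tsupport φ ⊆ Ω → (∀ x, 0 ≤ φ x) →
      (∫ x in Ω, u x * lap φ x) ≤ A * ∫ x in Ω,
        ((1 / ε) * Set.indicator {y | |u y - 1| < ε} (fun _ => (1 : ℝ)) x + 1) * φ x ∧
      -(∫ x in Ω, u x * lap φ x) ≤ A * ∫ x in Ω,
        ((1 / ε) * Set.indicator {y | |u y - 1| < ε} (fun _ => (1 : ℝ)) x + 1) * φ x) :
    AbsDistribLaplacianLE Ω u fun x => layerBound A ε (u x) := fun φ hφ hφc hφΩ hφ₀ => by
  have hΔ : lap φ = Δ φ := funext (lap_eq_laplacian (hφ.of_le (by norm_cast)))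
  have hbound := abs_le'.2 (h φ hφ hφc hφΩ hφ₀)
  rw [hΔ, ← integral_const_mul] at hbound
  simp only [layerBound, mul_assoc A]
  exact hbound

end TwoPhase

open TwoPhase in
theorem stmt_10_general (E : Type*) [NormedAddCommGroup E] [InnerProductSpace ℝ E]
    [FiniteDimensional ℝ E] [MeasurableSpace E] [BorelSpace E] {A K r ρ : ℝ} (hA : 0 < A)
    (hK : 0 ≤ K) (hr : r < ρ) :
    ∃ C : NNReal, 0 < C ∧ ∀ ε ∈ Ioc (0 : ℝ) 1, ∀ (u : E → ℝ) (c : E),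
      (∃ L : NNReal, LipschitzOnWith L u (ball c ρ)) → ∫ x in ball c ρ, u x ^ 2 ≤ K →
      AbsDistribLaplacianLE (ball c ρ) u (fun x => layerBound A ε (u x)) →
      LipschitzOnWith C u (ball c r) := by
  obtain ⟨C, hC, hlip⟩ := exists_lipschitzOnWith_of_absDistribLaplacianLE E hA hK hr
  refine ⟨C, hC, fun ε hε u c ⟨L, hu⟩ huK hΔ => ?_⟩
  obtain ⟨g, hg, hug⟩ := hu.extend_real
  have hgK : ∫ x in ball c ρ, g x ^ 2 ≤ K := by
    rwa [← setIntegral_congr_fun measurableSet_ball fun x hx => congrArg (· ^ 2) (hug hx)]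
  have hgΔ := hΔ.congr measurableSet_ball hug fun x hx => congrArg (layerBound A ε) (hug hx)
  have hug' := hug.mono (ball_subset_ball hr.le)
  exact fun x hx y hy => by
    simpa only [hug' hx, hug' hy] using hlip ε hε g c L hg hgK hgΔ hx hy

theorem stmt_10 {N : ℕ} (hN : 2 ≤ N) (A K : ℝ) (hA : 0 < A) (hK : 0 < K) :
    ∃ C > (0 : ℝ), ∀ ε : ℝ, ε ∈ Set.Ioc (0 : ℝ) 1 →
      ∀ u : EuclideanSpace ℝ (Fin N) → ℝ,
        (∃ L : NNReal, LipschitzOnWith L u (ball (0 : EuclideanSpace ℝ (Fin N)) 1)) →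
        (∫ x in ball (0 : EuclideanSpace ℝ (Fin N)) 1, (u x) ^ 2) ≤ K →
        (∀ φ : EuclideanSpace ℝ (Fin N) → ℝ, ContDiff ℝ (⊤ : ℕ∞) φ → HasCompactSupport φ →
          tsupport φ ⊆ ball (0 : EuclideanSpace ℝ (Fin N)) 1 → (∀ x, 0 ≤ φ x) →
          (∫ x in ball (0 : EuclideanSpace ℝ (Fin N)) 1, u x * lap φ x)
            ≤ A * ∫ x in ball (0 : EuclideanSpace ℝ (Fin N)) 1,
                ((1 / ε) * Set.indicator {y | |u y - 1| < ε} (fun _ => (1 : ℝ)) x + 1) * φ x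
          ∧ -(∫ x in ball (0 : EuclideanSpace ℝ (Fin N)) 1, u x * lap φ x)
            ≤ A * ∫ x in ball (0 : EuclideanSpace ℝ (Fin N)) 1,
                ((1 / ε) * Set.indicator {y | |u y - 1| < ε} (fun _ => (1 : ℝ)) x + 1) * φ x) →
        ∀ᵐ x ∂volume, x ∈ ball (0 : EuclideanSpace ℝ (Fin N)) (1 / 2) →
          ‖gradient u x‖ ≤ C := by
  obtain ⟨C, hC, hlip⟩ := stmt_10_general (EuclideanSpace ℝ (Fin N)) hA hK.le one_half_lt_one
  refine ⟨C, hC, fun ε hε u hu huK hΔ => .of_forall fun x hx => ?_⟩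
  rw [gradient, LinearIsometryEquiv.norm_map]
  exact norm_fderiv_le_of_lipschitzOn ℝ (isOpen_ball.mem_nhds hx)
    (hlip ε hε u 0 hu huK (TwoPhase.absDistribLaplacianLE_of_lap hΔ))
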